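/- arXiv:1402.1061 — 2 statements merged into one kernel-verified Lean document; each statement's English description precedes it below -/
import Mathlib

section
/- Let N ≥ 2 be an integer and p, q real numbers with p > 1 and q > p − 1. Then every strong solution u of (E) on all of ℝ^N is constant. -/
open Metric Set Filter Topology MeasureTheory

/-- The vector field `x ↦ |∇u(x)|^{p-2} ∇u(x)`. -/
noncomputable def pGradField {N : ℕ} (p : ℝ) (u : EuclideanSpace ℝ (Fin N) → ℝ)
    (x : EuclideanSpace ℝ (Fin N)) : EuclideanSpace ℝ (Fin N) :=
  ‖gradient u x‖ ^ (p - 2) • gradient u x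

/-- A strong solution of `(E) : -Δ_p u + |∇u|^q = 0` on an open set `G ⊆ ℝ^N`. -/
def IsStrongSolution {N : ℕ} (p q : ℝ) (G : Set (EuclideanSpace ℝ (Fin N)))
    (u : EuclideanSpace ℝ (Fin N) → ℝ) : Prop :=
  ContDiffOn ℝ 1 u G ∧
  ContDiffOn ℝ 3 u {x | x ∈ G ∧ gradient u x ≠ 0} ∧
  ∀ x ∈ G, DifferentiableAt ℝ (pGradField p u) x ∧
    LinearMap.trace ℝ (EuclideanSpace ℝ (Fin N))
      (fderiv ℝ (pGradField p u) x : EuclideanSpace ℝ (Fin N) →ₗ[ℝ] EuclideanSpace ℝ (Fin N))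
      = ‖gradient u x‖ ^ q

lemma nonpos_of_isLocalMax_of_hasDerivAt {f f' : ℝ → ℝ} {a t₀ : ℝ}
    (hf : ∀ᶠ t in 𝓝 t₀, HasDerivAt f (f' t) t) (hf' : HasDerivAt f' a t₀)
    (hmax : IsLocalMax f t₀) : a ≤ 0 := by
  by_contra! ha
  have hd : deriv f =ᶠ[𝓝 t₀] f' := hf.mono fun t ht => ht.deriv
  have h0 : deriv f t₀ = 0 := hmax.deriv_eq_zero
  have h2 : deriv (deriv f) t₀ = a := by rw [hd.deriv_eq, hf'.deriv]
  have hmin : IsLocalMin f t₀ :=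
    isLocalMin_of_deriv_deriv_pos (by rwa [h2]) h0 hf.self_of_nhds.continuousAt
  have hconst : f =ᶠ[𝓝 t₀] fun _ => f t₀ := by
    filter_upwards [hmax, hmin] with t h1 h2 using le_antisymm h1 h2
  have h3 : deriv f =ᶠ[𝓝 t₀] fun _ => 0 := by simpa using hconst.deriv
  rw [h3.deriv_eq, deriv_const] at h2
  exact ha.ne h2

lemma bernstein_scalar_bound {n : ℕ} {p s κ L g r T A₂ a₂ α tB b₀ Q : ℝ} (hs : 0 ≤ s) (hg : 0 < g)
    (hr : 0 ≤ r) (hκ : 0 ≤ κ) (hL : 0 ≤ L) (hQ : 0 ≤ Q) (hn : 0 < n)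
    (h0 : g ^ 2 * T + (p - 2) * α = g ^ 2 * Q)
    (h1 : 2 * α * T + g ^ 2 * tB + (p - 2) * (b₀ + 2 * a₂) = (s + 2) * Q * α)
    (h2 : g ^ 2 * (2 * tB + 2 * A₂) + (p - 2) * (2 * b₀ + 2 * a₂) ≤ L * g ^ 4 * r ^ 2)
    (hT : T ^ 2 ≤ n * A₂) (ha₂ : 0 ≤ a₂) (ha₂' : a₂ ≤ g ^ 4 * κ ^ 2 * r ^ 2)
    (hα : |α| ≤ g ^ 3 * κ * r) :
    Q ≤ (1 + 2 * |p - 2| * κ + n * (s * κ + L + 3 * |p - 2| * κ ^ 2)) * (g * r) := by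
  obtain ⟨β, rfl⟩ : ∃ β, α = g ^ 2 * β := ⟨α / g ^ 2, by field_simp⟩
  obtain ⟨w, rfl⟩ : ∃ w, a₂ = g ^ 2 * w := ⟨a₂ / g ^ 2, by field_simp⟩
  have hg2 : 0 < g ^ 2 := by positivity
  obtain ⟨y, hy⟩ : ∃ y, y = g * r := ⟨_, rfl⟩
  have hy0 : 0 ≤ y := by rw [hy]; positivity
  have hβ : |β| ≤ κ * y := by
    rw [abs_mul, abs_of_pos hg2] at hα
    refine le_of_mul_le_mul_left (hα.trans_eq ?_) hg2
    rw [hy]; ring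
  have hw : w ≤ κ ^ 2 * y ^ 2 := by
    refine le_of_mul_le_mul_left (ha₂'.trans_eq ?_) hg2
    rw [hy]; ring
  have hw0 : 0 ≤ w := nonneg_of_mul_nonneg_right ha₂ hg2
  have hTQ : T = Q - (p - 2) * β := by
    refine mul_left_cancel₀ hg2.ne' ?_
    linear_combination h0
  have hA : 2 * A₂ ≤ L * y ^ 2 + 2 * (p - 2) * w - 2 * (s + 2) * Q * β + 4 * β * T := by
    refine le_of_mul_le_mul_left ?_ hg2
    have : g ^ 2 * (L * y ^ 2) = L * g ^ 4 * r ^ 2 := by rw [hy]; ring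
    linear_combination h2 - this - 2 * h1
  rw [← hy]
  have hn' : (0 : ℝ) < n := by exact_mod_cast hn
  obtain ⟨c, hc⟩ : ∃ c, c = |p - 2| := ⟨_, rfl⟩
  rw [← hc]
  have hc0 : 0 ≤ c := hc ▸ abs_nonneg _
  have hpw : (p - 2) * w ≤ c * (κ ^ 2 * y ^ 2) :=
    (mul_le_mul_of_nonneg_right (hc ▸ le_abs_self _) hw0).trans
      (mul_le_mul_of_nonneg_left hw hc0)
  have hQβ : -(Q * β) ≤ Q * (κ * y) := by
    have := mul_le_mul_of_nonneg_left ((neg_le_abs β).trans hβ) hQ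
    linarith
  have hpβ : |(p - 2) * β| ≤ c * (κ * y) := by
    rw [abs_mul, ← hc]
    exact mul_le_mul_of_nonneg_left hβ hc0
  have hβ2 : β ^ 2 ≤ (κ * y) ^ 2 := sq_le_sq' (by linarith [neg_le_abs β]) (by linarith [le_abs_self β])
  have hpβ2 : -((p - 2) * β ^ 2) ≤ c * (κ * y) ^ 2 :=
    calc -((p - 2) * β ^ 2) = -(p - 2) * β ^ 2 := by ring
      _ ≤ c * β ^ 2 := mul_le_mul_of_nonneg_right (hc ▸ neg_le_abs _) (sq_nonneg β)
      _ ≤ c * (κ * y) ^ 2 := mul_le_mul_of_nonneg_left hβ2 hc0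
  have hA' : A₂ ≤ (L + 3 * c * κ ^ 2) * y ^ 2 + s * κ * (y * Q) := by
    have h3 := mul_le_mul_of_nonneg_left hQβ hs
    have h4 : 0 ≤ L * y ^ 2 := by positivity
    rw [hTQ] at hA
    linear_combination (1 / 2) * hA + (1 / 2) * h4 + hpw + h3 + 2 * hpβ2
  have hQ2 : Q ^ 2 ≤ 2 * c * κ * (y * Q) + n * A₂ := by
    have h3 := mul_le_mul_of_nonneg_left ((le_abs_self _).trans hpβ) hQ
    rw [hTQ] at hT
    linear_combination hT + 2 * h3 + sq_nonneg ((p - 2) * β)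
  by_contra! hlt
  obtain ⟨D, hD⟩ : ∃ D, D = 2 * c * κ + n * (s * κ + L + 3 * c * κ ^ 2) := ⟨_, rfl⟩
  have hD0 : 0 ≤ D := by rw [hD]; positivity
  have hlt' : (1 + D) * y < Q := by rw [hD]; linarith
  have hyQ : y ≤ Q := by nlinarith
  have hQ0 : 0 < Q := lt_of_le_of_lt (by positivity) hlt'
  have hyy : (n : ℝ) * (L + 3 * c * κ ^ 2) * (y * y) ≤ n * (L + 3 * c * κ ^ 2) * (y * Q) :=
    mul_le_mul_of_nonneg_left (mul_le_mul_of_nonneg_left hyQ hy0) (by positivity)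
  have hfin : Q * Q ≤ (D * y) * Q := by
    have := mul_le_mul_of_nonneg_left hA' hn'.le
    rw [hD]
    linear_combination hQ2 + this + hyy
  have := le_of_mul_le_mul_right hfin hQ0
  linarith

lemma bernstein_tensor_bound {E ι : Type*} [NormedAddCommGroup E] [InnerProductSpace ℝ E]
    [Fintype ι] (b : OrthonormalBasis ι ℝ E) (i₀ : ι) {A : E →L[ℝ] E} {B : E →L[ℝ] E →L[ℝ] E}
    {v : E} {p s κ K g r : ℝ} (hp : 1 < p) (hs : 0 ≤ s) (hg : 0 < g) (hr : 0 ≤ r) (hκ : 0 ≤ κ)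
    (hK : 0 ≤ K) (hv : v = g • b i₀)
    (hB : ∀ h k, B h k = B k h) (hB' : ∀ h k l, inner ℝ (B h k) l = inner ℝ (B h l) k)
    (h0 : g ^ 2 * ∑ i, inner ℝ (A (b i)) (b i) + (p - 2) * inner ℝ (A v) v = g ^ 2 * g ^ s)
    (h1 : 2 * inner ℝ (A v) v * ∑ i, inner ℝ (A (b i)) (b i)
      + g ^ 2 * ∑ i, inner ℝ (B v (b i)) (b i)
      + (p - 2) * (inner ℝ (B v v) v + 2 * ‖A v‖ ^ 2) = (s + 2) * g ^ s * inner ℝ (A v) v)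
    (hgrad : ‖A v‖ ≤ g ^ 2 * κ * r)
    (hH : ∀ i, 2 * inner ℝ (B (b i) (b i)) v + 2 * ‖A (b i)‖ ^ 2 ≤ K * g ^ 2 * r ^ 2) :
    g ^ s ≤ (1 + 2 * |p - 2| * κ + Fintype.card ι *
      (s * κ + (Fintype.card ι + p) * K + 3 * |p - 2| * κ ^ 2)) * (g * r) := by
  have hcard : 0 < Fintype.card ι := Fintype.card_pos_iff.2 ⟨i₀⟩
  have hnv : ‖v‖ = g := by rw [hv, norm_smul, b.norm_eq_one, Real.norm_eq_abs, abs_of_pos hg, mul_one]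
  have hBi : ∀ i, inner ℝ (B v (b i)) (b i) = inner ℝ (B (b i) (b i)) v := fun i => by
    rw [hB v, hB']
  refine bernstein_scalar_bound (A₂ := ∑ i, ‖A (b i)‖ ^ 2) (a₂ := ‖A v‖ ^ 2) hs hg hr hκ
    (by positivity) (by positivity) hcard h0 h1 ?_ ?_ (by positivity) ?_ ?_
  · have hAv : ‖A v‖ ^ 2 = g ^ 2 * ‖A (b i₀)‖ ^ 2 := by
      rw [hv, map_smul, norm_smul, Real.norm_eq_abs, abs_of_pos hg]; ring
    have hBv : inner ℝ (B v v) v = g ^ 2 * inner ℝ (B (b i₀) (b i₀)) v := by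
      nth_rewrite 1 2 [hv]
      simp only [map_smul, _root_.smul_apply, inner_smul_left, RCLike.conj_to_real]
      ring
    obtain ⟨H, hHdef⟩ : ∃ H : ι → ℝ,
        H = fun i => 2 * inner ℝ (B (b i) (b i)) v + 2 * ‖A (b i)‖ ^ 2 := ⟨_, rfl⟩
    have hH' : ∀ i, H i ≤ K * g ^ 2 * r ^ 2 := fun i => by rw [hHdef]; exact hH i
    have hsum : 2 * ∑ i, inner ℝ (B v (b i)) (b i) + 2 * ∑ i, ‖A (b i)‖ ^ 2 = ∑ i, H i := by
      simp only [hHdef, Finset.sum_add_distrib, Finset.mul_sum, hBi]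
    classical
    have hsplit : ∑ i, H i = H i₀ + ∑ i ∈ Finset.univ.erase i₀, H i :=
      (Finset.add_sum_erase _ _ (Finset.mem_univ i₀)).symm
    have hrest : ∑ i ∈ Finset.univ.erase i₀, H i ≤ Fintype.card ι * (K * g ^ 2 * r ^ 2) := by
      refine (Finset.sum_le_card_nsmul _ _ _ fun i _ => hH' i).trans ?_
      rw [nsmul_eq_mul]
      refine mul_le_mul_of_nonneg_right ?_ (by positivity)
      exact_mod_cast (Finset.card_le_card (Finset.erase_subset _ _))
    have hfirst : (p - 1) * H i₀ ≤ p * (K * g ^ 2 * r ^ 2) :=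
      (mul_le_mul_of_nonneg_left (hH' i₀) (by linarith)).trans
        (mul_le_mul_of_nonneg_right (by linarith) (by positivity))
    have hi₀ : H i₀ = 2 * inner ℝ (B (b i₀) (b i₀)) v + 2 * ‖A (b i₀)‖ ^ 2 := by rw [hHdef]
    rw [hsum, hsplit, hAv, hBv]
    have hg2 : 0 ≤ g ^ 2 := by positivity
    have := mul_le_mul_of_nonneg_left (add_le_add hrest hfirst) hg2
    rw [hi₀] at this ⊢
    linarith
  · refine sq_sum_le_card_mul_sum_sq.trans ?_
    rw [Finset.card_univ]
    refine mul_le_mul_of_nonneg_left (Finset.sum_le_sum fun i _ => ?_) (by positivity)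
    rw [← sq_abs]
    refine pow_le_pow_left₀ (abs_nonneg _) ?_ 2
    simpa using abs_real_inner_le_norm (A (b i)) (b i)
  · calc ‖A v‖ ^ 2 ≤ (g ^ 2 * κ * r) ^ 2 := pow_le_pow_left₀ (norm_nonneg _) hgrad 2
      _ = _ := by ring
  · calc |inner ℝ (A v) v| ≤ ‖A v‖ * ‖v‖ := abs_real_inner_le_norm _ _
      _ ≤ (g ^ 2 * κ * r) * g := by rw [hnv]; exact mul_le_mul_of_nonneg_right hgrad hg.le
      _ = _ := by ring

/-- The barrier `(R² - |x - c|²)^{-κ}` controls first and second derivatives of `|P|²` at a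
point where their quotient is maximal. -/
lemma barrier_second_order {E : Type*} [NormedAddCommGroup E] [InnerProductSpace ℝ E]
    {P : E → E} {x c : E} {R κ M : ℝ} (hP : ContDiffAt ℝ 2 P x)
    (hd : 0 < R ^ 2 - ‖x - c‖ ^ 2)
    (heq : ‖P x‖ ^ 2 = M * (R ^ 2 - ‖x - c‖ ^ 2) ^ (-κ))
    (hle : ∀ᶠ y in 𝓝 x, ‖P y‖ ^ 2 ≤ M * (R ^ 2 - ‖y - c‖ ^ 2) ^ (-κ)) (e : E) :
    inner ℝ (fderiv ℝ P x e) (P x)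
        = ‖P x‖ ^ 2 * κ * inner ℝ (x - c) e / (R ^ 2 - ‖x - c‖ ^ 2) ∧
    2 * inner ℝ (fderiv ℝ (fderiv ℝ P) x e e) (P x) + 2 * ‖fderiv ℝ P x e‖ ^ 2
      ≤ ‖P x‖ ^ 2 * (4 * κ * (κ + 1) * inner ℝ (x - c) e ^ 2 / (R ^ 2 - ‖x - c‖ ^ 2) ^ 2
        + 2 * κ * ‖e‖ ^ 2 / (R ^ 2 - ‖x - c‖ ^ 2)) := by
  have hγ : ∀ t : ℝ, HasDerivAt (fun t : ℝ => x + t • e) e t := fun t => by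
    simpa using ((hasDerivAt_id t).smul_const e).const_add x
  have hγ0 : Tendsto (fun t : ℝ => x + t • e) (𝓝 0) (𝓝 x) := by
    simpa using (hγ 0).continuousAt.tendsto
  have hPd : ∀ᶠ y in 𝓝 x, HasFDerivAt P (fderiv ℝ P y) y := by
    filter_upwards [hP.eventually (by simp)] with y hy
    exact (hy.differentiableAt (by simp)).hasFDerivAt
  have hB : HasFDerivAt (fderiv ℝ P) (fderiv ℝ (fderiv ℝ P) x) x :=
    ((hP.fderiv_right (m := 1) (by norm_num)).differentiableAt (by simp)).hasFDerivAt
  have hz : ∀ᶠ t in 𝓝 (0 : ℝ), HasDerivAt (fun t : ℝ => P (x + t • e))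
      (fderiv ℝ P (x + t • e) e) t := by
    filter_upwards [hγ0.eventually hPd] with t ht
    exact ht.comp_hasDerivAt t (hγ t)
  have hz' : HasDerivAt (fun t : ℝ => fderiv ℝ P (x + t • e) e)
      (fderiv ℝ (fderiv ℝ P) x e e) 0 := by
    have h := (show HasFDerivAt (fderiv ℝ P) (fderiv ℝ (fderiv ℝ P) x) (x + (0 : ℝ) • e) by
      simpa using hB).comp_hasDerivAt (0 : ℝ) (hγ 0)
    simpa using h.clm_apply (hasDerivAt_const (0 : ℝ) e)
  obtain ⟨d, hddef⟩ : ∃ d : ℝ → ℝ, d = fun t => R ^ 2 - ‖x + t • e - c‖ ^ 2 := ⟨_, rfl⟩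
  have hexp : ∀ t, d t = R ^ 2 - ‖x - c‖ ^ 2 - 2 * t * inner ℝ (x - c) e - t ^ 2 * ‖e‖ ^ 2 := by
    intro t
    rw [hddef]
    have : x + t • e - c = (x - c) + t • e := by abel
    simp only [this, norm_add_sq_real, inner_smul_right, norm_smul, Real.norm_eq_abs, mul_pow,
      sq_abs]
    ring
  have hd0 : d 0 = R ^ 2 - ‖x - c‖ ^ 2 := by rw [hexp]; ring
  have hdd : ∀ t, HasDerivAt d (-2 * inner ℝ (x - c) e - 2 * t * ‖e‖ ^ 2) t := by
    intro t
    rw [show d = _ from funext hexp]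
    have h := (((hasDerivAt_id t).const_mul 2).mul_const (inner ℝ (x - c) e)).const_sub
      (R ^ 2 - ‖x - c‖ ^ 2) |>.sub ((hasDerivAt_pow 2 t).mul_const (‖e‖ ^ 2))
    refine h.congr_deriv ?_
    simp
  have hdpos : ∀ᶠ t in 𝓝 (0 : ℝ), 0 < d t :=
    (hdd 0).continuousAt.eventually_const_lt (by rwa [hd0])
  have hf : ∀ᶠ t in 𝓝 (0 : ℝ), HasDerivAt
      (fun t => inner ℝ (P (x + t • e)) (P (x + t • e)) - M * d t ^ (-κ))
      (2 * inner ℝ (fderiv ℝ P (x + t • e) e) (P (x + t • e))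
        - M * ((-2 * inner ℝ (x - c) e - 2 * t * ‖e‖ ^ 2) * (-κ) * d t ^ (-κ - 1))) t := by
    filter_upwards [hz, hdpos] with t ht htd
    refine ((ht.inner ℝ ht).sub (((hdd t).rpow_const (Or.inl htd.ne')).const_mul M)).congr_deriv ?_
    rw [real_inner_comm (P (x + t • e))]
    ring
  have hf' : HasDerivAt (fun t => 2 * inner ℝ (fderiv ℝ P (x + t • e) e) (P (x + t • e))
        - M * ((-2 * inner ℝ (x - c) e - 2 * t * ‖e‖ ^ 2) * (-κ) * d t ^ (-κ - 1)))
      (2 * (inner ℝ (fderiv ℝ (fderiv ℝ P) x e e) (P x) + ‖fderiv ℝ P x e‖ ^ 2)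
        - M * (2 * κ * ‖e‖ ^ 2 * d 0 ^ (-κ - 1)
          + 4 * κ * (κ + 1) * inner ℝ (x - c) e ^ 2 * d 0 ^ (-κ - 2))) 0 := by
    have h1 := (hz'.inner ℝ hz.self_of_nhds).const_mul 2
    have h2 := ((((hasDerivAt_id (0 : ℝ)).const_mul 2).mul_const (‖e‖ ^ 2)).const_sub
      (-2 * inner ℝ (x - c) e)).mul_const (-κ)
    have h3 := (hdd 0).rpow_const (p := -κ - 1) (Or.inl hdpos.self_of_nhds.ne')
    refine (h1.sub ((h2.mul h3).const_mul M)).congr_deriv ?_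
    simp only [zero_smul, add_zero, real_inner_self_eq_norm_sq, id]
    rw [show -κ - 1 - 1 = -κ - 2 by ring]
    ring
  have hmax : IsLocalMax (fun t => inner ℝ (P (x + t • e)) (P (x + t • e)) - M * d t ^ (-κ)) 0 := by
    filter_upwards [hγ0.eventually hle] with t ht
    simp only [real_inner_self_eq_norm_sq, zero_smul, add_zero, heq, sub_self, hddef]
    exact sub_nonpos.2 ht
  have hone : M * d 0 ^ (-κ - 1) = ‖P x‖ ^ 2 / d 0 := by
    rw [Real.rpow_sub_one hdpos.self_of_nhds.ne', heq, hd0]; ring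
  have htwo : M * d 0 ^ (-κ - 2) = ‖P x‖ ^ 2 / d 0 ^ 2 := by
    rw [Real.rpow_sub hdpos.self_of_nhds, heq, hd0, Real.rpow_two]; ring
  constructor
  · have h := hmax.hasDerivAt_eq_zero hf.self_of_nhds
    simp only [zero_smul, add_zero] at h
    rw [← hd0]
    linear_combination (1 / 2) * h + κ * inner ℝ (x - c) e * hone
  · have h := nonpos_of_isLocalMax_of_hasDerivAt hf hf' hmax
    rw [← hd0]
    linear_combination h + 2 * κ * ‖e‖ ^ 2 * hone + 4 * κ * (κ + 1) * inner ℝ (x - c) e ^ 2 * htwo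

lemma deriv_nondivergence_equation {E ι : Type*} [NormedAddCommGroup E] [InnerProductSpace ℝ E]
    [Fintype ι] (b : OrthonormalBasis ι ℝ E) {P : E → E} {x : E} {p s : ℝ}
    (hP : ContDiffAt ℝ 2 P x) (hx : P x ≠ 0)
    (hsymm : ∀ h k, inner ℝ (fderiv ℝ P x h) k = inner ℝ (fderiv ℝ P x k) h)
    (heq : ∀ᶠ y in 𝓝 x, ‖P y‖ ^ 2 * ∑ i, inner ℝ (fderiv ℝ P y (b i)) (b i)
      + (p - 2) * inner ℝ (fderiv ℝ P y (P y)) (P y) = ‖P y‖ ^ 2 * ‖P y‖ ^ s) :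
    2 * inner ℝ (fderiv ℝ P x (P x)) (P x) * ∑ i, inner ℝ (fderiv ℝ P x (b i)) (b i)
      + ‖P x‖ ^ 2 * ∑ i, inner ℝ (fderiv ℝ (fderiv ℝ P) x (P x) (b i)) (b i)
      + (p - 2) * (inner ℝ (fderiv ℝ (fderiv ℝ P) x (P x) (P x)) (P x)
        + 2 * ‖fderiv ℝ P x (P x)‖ ^ 2)
      = (s + 2) * ‖P x‖ ^ s * inner ℝ (fderiv ℝ P x (P x)) (P x) := by
  obtain ⟨v, hv⟩ : ∃ v, v = P x := ⟨_, rfl⟩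
  have hγ : HasDerivAt (fun t : ℝ => x + t • v) v 0 := by
    simpa using ((hasDerivAt_id (0 : ℝ)).smul_const v).const_add x
  have hγ0 : Tendsto (fun t : ℝ => x + t • v) (𝓝 0) (𝓝 x) := by
    simpa using hγ.continuousAt.tendsto
  have hB : HasFDerivAt (fderiv ℝ P) (fderiv ℝ (fderiv ℝ P) x) (x + (0 : ℝ) • v) := by
    simpa using
      ((hP.fderiv_right (m := 1) (by norm_num)).differentiableAt (by simp)).hasFDerivAt
  have hA : HasFDerivAt P (fderiv ℝ P x) (x + (0 : ℝ) • v) := by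
    simpa using (hP.differentiableAt (by simp)).hasFDerivAt
  have hB' := hB.comp_hasDerivAt (0 : ℝ) hγ
  have hA' := hA.comp_hasDerivAt (0 : ℝ) hγ
  have hz := hA'.inner ℝ hA'
  have hT : HasDerivAt (fun t : ℝ => ∑ i, inner ℝ (fderiv ℝ P (x + t • v) (b i)) (b i))
      (∑ i, inner ℝ (fderiv ℝ (fderiv ℝ P) x v (b i)) (b i)) 0 := by
    refine HasDerivAt.fun_sum fun i _ => ?_
    simpa using (hB'.clm_apply (hasDerivAt_const (0 : ℝ) (b i))).inner ℝ
      (hasDerivAt_const (0 : ℝ) (b i))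
  have hC := (hB'.clm_apply hA').inner ℝ hA'
  have hpow : ∀ y, ‖P y‖ ^ 2 * ‖P y‖ ^ s = (inner ℝ (P y) (P y)) ^ (s / 2) * inner ℝ (P y) (P y) := by
    intro y
    rw [real_inner_self_eq_norm_sq, ← Real.rpow_natCast_mul (norm_nonneg _)]
    push_cast
    rw [mul_div_cancel₀ s two_ne_zero, mul_comm]
  have hz0 : inner ℝ (P (x + (0 : ℝ) • v)) (P (x + (0 : ℝ) • v)) ≠ 0 := by
    simpa using hx
  have hl := (hz.mul hT).add (hC.const_mul (p - 2))
  have hr := (hz.rpow_const (p := s / 2) (Or.inl hz0)).mul hz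
  have huniq := hl.unique (hr.congr_of_eventuallyEq (by
    filter_upwards [hγ0.eventually heq] with t ht
    simp only [Function.comp_apply, Pi.mul_apply, Pi.add_apply, real_inner_self_eq_norm_sq] at ht ⊢
    rw [ht, hpow, real_inner_self_eq_norm_sq]))
  have hg : 0 < ‖P x‖ := norm_pos_iff.2 hx
  have hg2 : (‖P x‖ ^ 2) ^ (s / 2) = ‖P x‖ ^ s := by
    rw [← Real.rpow_natCast_mul (norm_nonneg _)]
    congr 1
    push_cast
    ring
  have hg3 : (‖P x‖ ^ 2) ^ (s / 2 - 1) * ‖P x‖ ^ 2 = ‖P x‖ ^ s := by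
    rw [Real.rpow_sub_one (by positivity), hg2]
    field_simp
  simp only [Function.comp_apply, zero_smul, add_zero, ← hv, real_inner_self_eq_norm_sq,
    inner_add_left] at huniq hg2 hg3 ⊢
  rw [hsymm (fderiv ℝ P x v) v, real_inner_self_eq_norm_sq, hg2,
    real_inner_comm (fderiv ℝ P x v) v] at huniq
  linear_combination huniq + s * inner ℝ (fderiv ℝ P x v) v * hg3

lemma trace_fderiv_norm_rpow_smul {E ι : Type*} [NormedAddCommGroup E] [InnerProductSpace ℝ E]
    [Fintype ι] (b : OrthonormalBasis ι ℝ E) {P : E → E} {x : E} {r : ℝ}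
    (hP : DifferentiableAt ℝ P x) (hx : P x ≠ 0)
    (hsymm : ∀ h k, inner ℝ (fderiv ℝ P x h) k = inner ℝ (fderiv ℝ P x k) h) :
    ‖P x‖ ^ 2 * LinearMap.trace ℝ E (fderiv ℝ (fun y => ‖P y‖ ^ r • P y) x : E →ₗ[ℝ] E)
      = ‖P x‖ ^ r * (‖P x‖ ^ 2 * ∑ i, inner ℝ (fderiv ℝ P x (b i)) (b i)
        + r * inner ℝ (fderiv ℝ P x (P x)) (P x)) := by
  have hg : 0 < ‖P x‖ := norm_pos_iff.2 hx
  have hpow : ∀ (g t : ℝ), 0 ≤ g → g ^ t = (g ^ 2) ^ (t / 2) := by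
    intro g t hg
    rw [← Real.rpow_natCast_mul hg]
    congr 1
    push_cast
    ring
  have hz := (hP.hasFDerivAt.inner ℝ hP.hasFDerivAt).rpow_const (p := r / 2)
    (Or.inl (by simpa using hx))
  have hW := hz.smul hP.hasFDerivAt
  have hfun : (fun y => ‖P y‖ ^ r • P y)
      = (fun y => (inner ℝ (P y) (P y) : ℝ) ^ (r / 2)) • P := by
    funext y
    simp only [Pi.smul_apply', real_inner_self_eq_norm_sq]
    rw [hpow _ r (norm_nonneg _)]
  have hval : ∀ h, fderiv ℝ (fun y => ‖P y‖ ^ r • P y) x h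
      = ‖P x‖ ^ r • fderiv ℝ P x h
        + (r * ‖P x‖ ^ (r - 2) * inner ℝ (fderiv ℝ P x h) (P x)) • P x := by
    intro h
    rw [hfun, hW.fderiv, hpow _ r (norm_nonneg _), hpow _ (r - 2) (norm_nonneg _)]
    rw [show (r - 2) / 2 = r / 2 - 1 by ring]
    simp only [real_inner_self_eq_norm_sq, _root_.add_apply, _root_.smul_apply,
      ContinuousLinearMap.smulRight_apply, ContinuousLinearMap.comp_apply,
      ContinuousLinearMap.prod_apply, fderivInnerCLM_apply, smul_eq_mul]
    rw [real_inner_comm (P x)]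
    congr 2
    ring
  rw [LinearMap.trace_eq_sum_inner _ b]
  simp only [ContinuousLinearMap.coe_coe, hval, inner_add_right, inner_smul_right,
    Finset.sum_add_distrib, ← Finset.mul_sum]
  have hs : ∑ i, inner ℝ (fderiv ℝ P x (b i)) (P x) * inner ℝ (b i) (P x)
      = inner ℝ (fderiv ℝ P x (P x)) (P x) := by
    rw [← b.sum_inner_mul_inner]
    exact Finset.sum_congr rfl fun i _ => by rw [hsymm]
  have hg2 : ‖P x‖ ^ (r - 2) * ‖P x‖ ^ 2 = ‖P x‖ ^ r := by
    rw [Real.rpow_sub hg, Real.rpow_two]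
    field_simp
  simp only [mul_assoc, ← Finset.mul_sum, hs, real_inner_comm (b _) (fderiv ℝ P x (b _))]
  linear_combination r * inner ℝ (fderiv ℝ P x (P x)) (P x) * hg2

section Gradient

variable {E : Type*} [NormedAddCommGroup E] [InnerProductSpace ℝ E] [CompleteSpace E]

lemma ContDiffAt.gradient {u : E → ℝ} {x : E} (hu : ContDiffAt ℝ 3 u x) :
    ContDiffAt ℝ 2 (gradient u) x :=
  (InnerProductSpace.toDual ℝ E).symm.contDiff.contDiffAt.comp x
    (hu.fderiv_right (m := 2) (by norm_num))

lemma inner_fderiv_gradient {u : E → ℝ} {x : E} (hu : ContDiffAt ℝ 3 u x) (h k : E) :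
    inner ℝ (fderiv ℝ (gradient u) x h) k = fderiv ℝ (fderiv ℝ u) x h k := by
  have hd : DifferentiableAt ℝ (fderiv ℝ u) x :=
    (hu.fderiv_right (m := 2) (by norm_num)).differentiableAt (by simp)
  have : HasFDerivAt (gradient u) _ x :=
    (InnerProductSpace.toDual ℝ E).symm.toContinuousLinearEquiv.hasFDerivAt.comp x hd.hasFDerivAt
  rw [this.fderiv]
  exact InnerProductSpace.toDual_symm_apply

lemma inner_fderiv_gradient_comm {u : E → ℝ} {x : E} (hu : ContDiffAt ℝ 3 u x) (h k : E) :
    inner ℝ (fderiv ℝ (gradient u) x h) k = inner ℝ (fderiv ℝ (gradient u) x k) h := by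
  rw [inner_fderiv_gradient hu, inner_fderiv_gradient hu]
  exact (hu.isSymmSndFDerivAt (by simp; norm_num)) h k

lemma inner_fderiv_fderiv_gradient_comm {u : E → ℝ} {x : E} (hu : ContDiffAt ℝ 3 u x)
    (h k l : E) :
    inner ℝ (fderiv ℝ (fderiv ℝ (gradient u)) x h k) l
      = inner ℝ (fderiv ℝ (fderiv ℝ (gradient u)) x h l) k := by
  have hB : HasFDerivAt (fderiv ℝ (gradient u)) (fderiv ℝ (fderiv ℝ (gradient u)) x) x :=
    ((hu.gradient.fderiv_right (m := 1) (by norm_num)).differentiableAt (by simp)).hasFDerivAt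
  have hder : ∀ k l : E, HasFDerivAt (fun y => (inner ℝ (fderiv ℝ (gradient u) y k) l : ℝ)) _ x :=
    fun k l => (hB.clm_apply (hasFDerivAt_const k x)).inner ℝ (hasFDerivAt_const l x)
  have huniq := (hder k l).unique ((hder l k).congr_of_eventuallyEq (by
    filter_upwards [hu.eventually (by simp)] with y hy using inner_fderiv_gradient_comm hy k l))
  simpa using DFunLike.congr_fun huniq h

end Gradient

lemma IsStrongSolution.nondivergence_equation {N : ℕ} {p q : ℝ} {G : Set (EuclideanSpace ℝ (Fin N))}
    {u : EuclideanSpace ℝ (Fin N) → ℝ} (hu : IsStrongSolution p q G u) {ι : Type*} [Fintype ι]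
    (b : OrthonormalBasis ι ℝ (EuclideanSpace ℝ (Fin N))) {x : EuclideanSpace ℝ (Fin N)}
    (hx : x ∈ G) (hu3 : ContDiffAt ℝ 3 u x) (hux : gradient u x ≠ 0) :
    ‖gradient u x‖ ^ 2 * ∑ i, inner ℝ (fderiv ℝ (gradient u) x (b i)) (b i)
      + (p - 2) * inner ℝ (fderiv ℝ (gradient u) x (gradient u x)) (gradient u x)
      = ‖gradient u x‖ ^ 2 * ‖gradient u x‖ ^ (q - p + 2) := by
  have hg : 0 < ‖gradient u x‖ := norm_pos_iff.2 hux
  have h := trace_fderiv_norm_rpow_smul (r := p - 2) b (hu3.gradient.differentiableAt (by simp)) hux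
    (inner_fderiv_gradient_comm hu3)
  have htr := (hu.2.2 x hx).2
  unfold pGradField at htr
  rw [htr] at h
  have hsplit : ‖gradient u x‖ ^ q = ‖gradient u x‖ ^ (p - 2) * ‖gradient u x‖ ^ (q - p + 2) := by
    rw [← Real.rpow_add hg]
    congr 1
    ring
  have hne : ‖gradient u x‖ ^ (p - 2) ≠ 0 := (Real.rpow_pos_of_pos hg _).ne'
  refine mul_left_cancel₀ hne ?_
  rw [← h, hsplit]
  ring

/-- Bernstein's estimate at a point where `|∇u|^{q-p+1} (R² - |x - c|²)` is maximal. -/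
lemma IsStrongSolution.norm_gradient_rpow_mul_le {N : ℕ} {p q : ℝ} (hp : 1 < p) (hq : p - 1 < q)
    {u : EuclideanSpace ℝ (Fin N) → ℝ} (hu : IsStrongSolution p q Set.univ u) :
    ∃ C : ℝ, ∀ (c x : EuclideanSpace ℝ (Fin N)) (R M : ℝ), 0 < R → gradient u x ≠ 0 →
      0 < R ^ 2 - ‖x - c‖ ^ 2 →
      ‖gradient u x‖ ^ 2 = M * (R ^ 2 - ‖x - c‖ ^ 2) ^ (-(2 / (q - p + 1))) →
      (∀ᶠ y in 𝓝 x, ‖gradient u y‖ ^ 2 ≤ M * (R ^ 2 - ‖y - c‖ ^ 2) ^ (-(2 / (q - p + 1)))) →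
      ‖gradient u x‖ ^ (q - p + 1) * (R ^ 2 - ‖x - c‖ ^ 2) ≤ C * R := by
  obtain ⟨κ, hκdef⟩ : ∃ κ, κ = 2 / (q - p + 1) := ⟨_, rfl⟩
  have hκ : 0 ≤ κ := by rw [hκdef]; exact div_nonneg zero_le_two (by linarith)
  rw [← hκdef]
  obtain ⟨C, hC⟩ : ∃ C, C = 1 + 2 * |p - 2| * κ + Fintype.card (Fin N) * ((q - p + 2) * κ
    + (Fintype.card (Fin N) + p) * (4 * κ * (κ + 1) + 2 * κ) + 3 * |p - 2| * κ ^ 2) := ⟨_, rfl⟩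
  refine ⟨C, fun c x R M hR hux hd heq hle => ?_⟩
  have hg : 0 < ‖gradient u x‖ := norm_pos_iff.2 hux
  obtain ⟨d, hddef⟩ : ∃ d, d = R ^ 2 - ‖x - c‖ ^ 2 := ⟨_, rfl⟩
  have hcont : Continuous (gradient u) :=
    (InnerProductSpace.toDual ℝ _).symm.continuous.comp
      ((contDiffOn_univ.1 hu.1).continuous_fderiv (by simp))
  have hopen : IsOpen {y | y ∈ Set.univ ∧ gradient u y ≠ 0} := by
    simpa using isOpen_ne_fun hcont continuous_const
  have hu3 : ∀ y, gradient u y ≠ 0 → ContDiffAt ℝ 3 u y := fun y hy =>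
    hu.2.1.contDiffAt (hopen.mem_nhds ⟨mem_univ y, hy⟩)
  have h3 := hu3 x hux
  obtain ⟨b, i₀, hb⟩ : ∃ (b : OrthonormalBasis (Fin N) ℝ (EuclideanSpace ℝ (Fin N))) (i₀ : Fin N),
      gradient u x = ‖gradient u x‖ • b i₀ := by
    have hN : 0 < N := by
      rcases Nat.eq_zero_or_pos N with rfl | hN
      · exact absurd (Subsingleton.elim _ _) hux
      · exact hN
    have horth : Orthonormal ℝ (Set.domRestrict {(⟨0, hN⟩ : Fin N)}
        (fun _ => ‖gradient u x‖⁻¹ • gradient u x)) :=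
      ⟨fun _ => norm_smul_inv_norm hux, fun i j hij => absurd (Subsingleton.elim i j) hij⟩
    obtain ⟨b, hb⟩ := horth.exists_orthonormalBasis_extension_of_card_eq (by simp)
    refine ⟨b, ⟨0, hN⟩, ?_⟩
    rw [hb _ rfl, smul_smul, mul_inv_cancel₀ hg.ne', one_smul]
  have hbar := barrier_second_order h3.gradient hd heq hle
  have hxc : ‖x - c‖ ≤ R := by nlinarith [norm_nonneg (x - c)]
  rw [← hddef] at hd hbar ⊢
  have hdR : d ≤ R ^ 2 := by rw [hddef]; linarith [sq_nonneg ‖x - c‖]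
  have hinner : ∀ e, |inner ℝ (x - c) e| ≤ R * ‖e‖ := fun e =>
    (abs_real_inner_le_norm _ _).trans (mul_le_mul_of_nonneg_right hxc (norm_nonneg e))
  have hmain := bernstein_tensor_bound (p := p) (s := q - p + 2) (κ := κ)
    (K := 4 * κ * (κ + 1) + 2 * κ) (g := ‖gradient u x‖) (r := R / d) b i₀ hp (by linarith) hg
    (by positivity) hκ (by positivity) hb
    (fun h k => (h3.gradient.isSymmSndFDerivAt (by simp)) h k)
    (inner_fderiv_fderiv_gradient_comm h3)
    (hu.nondivergence_equation b (mem_univ x) h3 hux)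
    (deriv_nondivergence_equation b h3.gradient hux (inner_fderiv_gradient_comm h3) (by
      filter_upwards [hopen.mem_nhds ⟨mem_univ x, hux⟩] with y hy
      exact hu.nondivergence_equation b hy.1 (hu3 y hy.2) hy.2))
    ?_ ?_
  · have hsplit : ‖gradient u x‖ ^ (q - p + 2) = ‖gradient u x‖ ^ (q - p + 1) * ‖gradient u x‖ := by
      rw [← Real.rpow_add_one hg.ne']
      congr 1
      ring
    rw [← hC, hsplit] at hmain
    have hRd : R / d * d = R := by field_simp
    refine le_of_mul_le_mul_right ?_ hg
    linear_combination mul_le_mul_of_nonneg_right hmain hd.le + C * ‖gradient u x‖ * hRd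
  · obtain ⟨w, hw⟩ : ∃ w, w = fderiv ℝ (gradient u) x (gradient u x) := ⟨_, rfl⟩
    have h4 := (hbar w).1
    rw [inner_fderiv_gradient_comm h3, ← hw, real_inner_self_eq_norm_sq] at h4
    rw [← hw]
    rcases (norm_nonneg w).eq_or_lt with h0 | h0
    · rw [← h0]; positivity
    · refine le_of_mul_le_mul_right ?_ h0
      calc ‖w‖ * ‖w‖ = ‖gradient u x‖ ^ 2 * κ * inner ℝ (x - c) w / d := by rw [← h4]; ring
        _ ≤ ‖gradient u x‖ ^ 2 * κ * (R * ‖w‖) / d := by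
          gcongr
          exact (le_abs_self _).trans (hinner w)
        _ = _ := by ring
  · intro i
    refine (hbar (b i)).2.trans ?_
    have hi := hinner (b i)
    rw [b.norm_eq_one] at hi ⊢
    rw [mul_one] at hi
    have hi2 : inner ℝ (x - c) (b i) ^ 2 ≤ R ^ 2 := sq_le_sq' (abs_le.1 hi).1 (abs_le.1 hi).2
    have hdd : 2 * κ * 1 ^ 2 / d ≤ 2 * κ * R ^ 2 / d ^ 2 := by
      rw [div_le_div_iff₀ hd (by positivity)]
      nlinarith [mul_le_mul_of_nonneg_left hdR (mul_nonneg hκ hd.le)]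
    calc _ ≤ ‖gradient u x‖ ^ 2 * (4 * κ * (κ + 1) * R ^ 2 / d ^ 2 + 2 * κ * R ^ 2 / d ^ 2) := by
          gcongr
      _ = _ := by ring

lemma IsStrongSolution.gradient_eq_zero {N : ℕ} {p q : ℝ} (hp : 1 < p) (hq : p - 1 < q)
    {u : EuclideanSpace ℝ (Fin N) → ℝ} (hu : IsStrongSolution p q Set.univ u)
    (c : EuclideanSpace ℝ (Fin N)) : gradient u c = 0 := by
  obtain ⟨C, hC⟩ := hu.norm_gradient_rpow_mul_le hp hq
  by_contra hc
  have hθ : 0 < q - p + 1 := by linarith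
  have hgc : 0 < ‖gradient u c‖ ^ (q - p + 1) := Real.rpow_pos_of_pos (norm_pos_iff.2 hc) _
  have hcont : Continuous (gradient u) :=
    (InnerProductSpace.toDual ℝ _).symm.continuous.comp
      ((contDiffOn_univ.1 hu.1).continuous_fderiv (by simp))
  have key : ∀ R : ℝ, 0 < R → ‖gradient u c‖ ^ (q - p + 1) * R ≤ C := by
    intro R hR
    obtain ⟨F, hF⟩ : ∃ F : EuclideanSpace ℝ (Fin N) → ℝ,
        F = fun y => ‖gradient u y‖ ^ (q - p + 1) * (R ^ 2 - ‖y - c‖ ^ 2) := ⟨_, rfl⟩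
    have hFcont : Continuous F := by
      rw [hF]
      exact (hcont.norm.rpow_const fun _ => Or.inr hθ.le).mul (by fun_prop)
    obtain ⟨x, -, hmax⟩ := (isCompact_closedBall c R).exists_isMaxOn
      ⟨c, mem_closedBall_self hR.le⟩ hFcont.continuousOn
    have hFc : F c = ‖gradient u c‖ ^ (q - p + 1) * R ^ 2 := by simp [hF]
    have hcx : F c ≤ F x := hmax (mem_closedBall_self hR.le)
    have hFx : 0 < F x := lt_of_lt_of_le (by rw [hFc]; positivity) hcx
    have hFx' : F x = ‖gradient u x‖ ^ (q - p + 1) * (R ^ 2 - ‖x - c‖ ^ 2) := by rw [hF]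
    have hd : 0 < R ^ 2 - ‖x - c‖ ^ 2 :=
      pos_of_mul_pos_right (hFx' ▸ hFx) (Real.rpow_nonneg (norm_nonneg _) _)
    have hux : gradient u x ≠ 0 := by
      intro h0
      rw [hFx', h0, norm_zero, Real.zero_rpow hθ.ne', zero_mul] at hFx
      exact hFx.false
    have hsq : ∀ y, 0 < R ^ 2 - ‖y - c‖ ^ 2 → ‖gradient u y‖ ^ 2
        = F y ^ (2 / (q - p + 1)) * (R ^ 2 - ‖y - c‖ ^ 2) ^ (-(2 / (q - p + 1))) := by
      intro y hy
      rw [hF, Real.mul_rpow (Real.rpow_nonneg (norm_nonneg _) _) hy.le, mul_assoc,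
        ← Real.rpow_add hy, add_neg_cancel, Real.rpow_zero, mul_one,
        ← Real.rpow_mul (norm_nonneg _), mul_div_cancel₀ _ hθ.ne', Real.rpow_two]
    have h := hC c x R (F x ^ (2 / (q - p + 1))) hR hux hd (hsq x hd) (by
      have hev : ∀ᶠ y in 𝓝 x, 0 < R ^ 2 - ‖y - c‖ ^ 2 :=
        (show Continuous fun y => R ^ 2 - ‖y - c‖ ^ 2 by fun_prop).continuousAt.eventually_const_lt hd
      filter_upwards [hev] with y hy
      have hyR : y ∈ closedBall c R := by
        rw [mem_closedBall_iff_norm]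
        nlinarith [norm_nonneg (y - c)]
      rw [hsq y hy]
      refine mul_le_mul_of_nonneg_right (Real.rpow_le_rpow ?_ (hmax hyR) (by positivity))
        (Real.rpow_nonneg hy.le _)
      rw [hF]
      positivity)
    rw [← hFx'] at h
    refine le_of_mul_le_mul_right ?_ hR
    calc _ = F c := by rw [hFc]; ring
      _ ≤ _ := hcx.trans h
  have hC0 := key 1 one_pos
  have := key ((C + 1) / ‖gradient u c‖ ^ (q - p + 1)) (div_pos (by linarith) hgc)
  rw [mul_div_cancel₀ _ hgc.ne'] at this
  linarith

/-- Liouville: any strong solution of (E) on all of `ℝ^N` is constant. -/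
theorem liouville (N : ℕ) (hN : 2 ≤ N) (p q : ℝ) (hp : 1 < p) (hq : p - 1 < q)
    (u : EuclideanSpace ℝ (Fin N) → ℝ) (hu : IsStrongSolution p q Set.univ u) :
    ∀ x y : EuclideanSpace ℝ (Fin N), u x = u y := by

  have hdiff : Differentiable ℝ u := (contDiffOn_univ.1 hu.1).differentiable (by simp)
  refine is_const_of_fderiv_eq_zero hdiff fun x => ?_
  exact (LinearIsometryEquiv.map_eq_zero_iff _).1 (hu.gradient_eq_zero hp hq x)
end

section
/- Let N ≥ 2, p > 1 and q > p − 1. There exists a constant C = C(N,p,q) > 0 such that for every open set Ω ⊆ ℝ^N, every strong solution u of (E) on Ω with u > 0 on Ω, every a ∈ Ω and every R > 0 with the closed ball \overline{B}_R(a) contained in Ω, one has max{ u(x) : x ∈ \overline{B}_{R/2}(a) } ≤ C · min{ u(x) : x ∈ \overline{B}_{R/2}(a) }. -/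
open Metric Set Filter Topology MeasureTheory

/-- The partial derivative of `f` in the `i`-th coordinate direction. -/
noncomputable def partialD {N : ℕ} (i : Fin N) (f : EuclideanSpace ℝ (Fin N) → ℝ)
    (x : EuclideanSpace ℝ (Fin N)) : ℝ :=
  fderiv ℝ f x (EuclideanSpace.single i 1)

section PartialDerivatives

variable {N : ℕ} {f g : EuclideanSpace ℝ (Fin N) → ℝ} {x : EuclideanSpace ℝ (Fin N)}

lemma HasFDerivAt.partialD_eq {L : EuclideanSpace ℝ (Fin N) →L[ℝ] ℝ} (h : HasFDerivAt f L x)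
    (i : Fin N) : partialD i f x = L (EuclideanSpace.single i 1) := by
  rw [partialD, h.fderiv]

lemma partialD_congr (h : f =ᶠ[𝓝 x] g) (i : Fin N) : partialD i f x = partialD i g x := by
  rw [partialD, partialD, h.fderiv_eq]

lemma ContDiffAt.partialD {n m : WithTop ℕ∞} (h : ContDiffAt ℝ n f x) (hmn : m + 1 ≤ n)
    (i : Fin N) : ContDiffAt ℝ m (partialD i f) x :=
  (h.fderiv_right hmn).clm_apply contDiffAt_const

lemma partialD_comm (h : ContDiffAt ℝ 2 f x) (i j : Fin N) :
    partialD i (partialD j f) x = partialD j (partialD i f) x := by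
  have key : ∀ k l : Fin N, partialD k (partialD l f) x =
      fderiv ℝ (fderiv ℝ f) x (EuclideanSpace.single k 1) (EuclideanSpace.single l 1) := by
    intro k l
    have h1 : DifferentiableAt ℝ (fderiv ℝ f) x :=
      (h.fderiv_right (m := 1) (by norm_num)).differentiableAt (by norm_num)
    have h2 := h1.hasFDerivAt.clm_apply
      (hasFDerivAt_const (EuclideanSpace.single l (1 : ℝ)) x)
    simpa using HasFDerivAt.partialD_eq (f := partialD l f) h2 k
  rw [key, key]
  exact (h.isSymmSndFDerivAt (by simp)).eq _ _

lemma partialD_add (hf : DifferentiableAt ℝ f x) (hg : DifferentiableAt ℝ g x) (i : Fin N) :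
    partialD i (fun y => f y + g y) x = partialD i f x + partialD i g x := by
  simpa [partialD] using (hf.hasFDerivAt.fun_add hg.hasFDerivAt).partialD_eq i

lemma partialD_sub (hf : DifferentiableAt ℝ f x) (hg : DifferentiableAt ℝ g x) (i : Fin N) :
    partialD i (fun y => f y - g y) x = partialD i f x - partialD i g x := by
  simpa [partialD] using (hf.hasFDerivAt.fun_sub hg.hasFDerivAt).partialD_eq i

lemma partialD_mul (hf : DifferentiableAt ℝ f x) (hg : DifferentiableAt ℝ g x) (i : Fin N) :
    partialD i (fun y => f y * g y) x = f x * partialD i g x + g x * partialD i f x := by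
  simpa [partialD] using (hf.hasFDerivAt.fun_mul hg.hasFDerivAt).partialD_eq i

lemma partialD_const_mul (c : ℝ) (hf : DifferentiableAt ℝ f x) (i : Fin N) :
    partialD i (fun y => c * f y) x = c * partialD i f x := by
  simpa [partialD] using (hf.hasFDerivAt.const_mul c).partialD_eq i

lemma partialD_exp (hf : DifferentiableAt ℝ f x) (i : Fin N) :
    partialD i (fun y => Real.exp (f y)) x = Real.exp (f x) * partialD i f x := by
  simpa [partialD] using hf.hasFDerivAt.exp.partialD_eq i

lemma partialD_log (hf : DifferentiableAt ℝ f x) (h0 : f x ≠ 0) (i : Fin N) :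
    partialD i (fun y => Real.log (f y)) x = (f x)⁻¹ * partialD i f x := by
  simpa [partialD] using (hf.hasFDerivAt.log h0).partialD_eq i

lemma partialD_sum {F : Fin N → EuclideanSpace ℝ (Fin N) → ℝ}
    (hF : ∀ j, DifferentiableAt ℝ (F j) x) (i : Fin N) :
    partialD i (fun y => ∑ j, F j y) x = ∑ j, partialD i (F j) x := by
  simpa [partialD] using
    (HasFDerivAt.fun_sum (u := Finset.univ) fun j _ => (hF j).hasFDerivAt).partialD_eq i

lemma fderiv_apply_eq_sum_partialD (v : EuclideanSpace ℝ (Fin N)) :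
    fderiv ℝ f x v = ∑ i, v i * partialD i f x := by
  have hv : v = ∑ i, v i • EuclideanSpace.single i (1 : ℝ) := by
    ext j
    simp [Pi.single_apply]
  conv_lhs => rw [hv]
  simp [partialD]

end PartialDerivatives

/-- Bochner-type inequality for `y = log |∇w|²`, where `w` solves the equation satisfied by the
logarithm of a solution of `(E)`. -/
lemma bochner_log_gradient {N : ℕ} (hN : 0 < N) (p s : ℝ)
    {w y : EuclideanSpace ℝ (Fin N) → ℝ} {U : Set (EuclideanSpace ℝ (Fin N))} (hU : IsOpen U)
    (hw : ∀ x ∈ U, ContDiffAt ℝ 3 w x) (hy : ∀ x ∈ U, ContDiffAt ℝ 2 y x)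
    (hyw : ∀ x ∈ U, Real.exp (y x) = ∑ i, partialD i w x * partialD i w x)
    (heq : ∀ x ∈ U, ∑ i, partialD i (partialD i w) x
        + (p - 2) / 2 * ∑ i, partialD i y x * partialD i w x
      = Real.exp (s * w x + (s + 1) / 2 * y x) - (p - 1) * Real.exp (y x))
    {x : EuclideanSpace ℝ (Fin N)} (hx : x ∈ U) :
    2 / N * (∑ i, partialD i (partialD i w) x) ^ 2
        - p / 2 * Real.exp (y x) * ∑ i, partialD i y x ^ 2
        + 2 * s * Real.exp (s * w x + (s + 1) / 2 * y x) * Real.exp (y x)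
        + ((s + 1) * Real.exp (s * w x + (s + 1) / 2 * y x) - 2 * (p - 1) * Real.exp (y x))
          * ∑ i, partialD i y x * partialD i w x
      ≤ Real.exp (y x) * ∑ i, partialD i (partialD i y) x
        + (p - 2) * ∑ i, ∑ j, partialD i (partialD j y) x * partialD i w x * partialD j w x := by
  have dw : ∀ x ∈ U, DifferentiableAt ℝ w x := fun x hx => (hw x hx).differentiableAt (by norm_num)
  have dy : ∀ x ∈ U, DifferentiableAt ℝ y x := fun x hx => (hy x hx).differentiableAt (by norm_num)
  have cw1 : ∀ x ∈ U, ∀ i, ContDiffAt ℝ 2 (partialD i w) x :=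
    fun x hx i => (hw x hx).partialD (by norm_num) i
  have dw1 : ∀ x ∈ U, ∀ i, DifferentiableAt ℝ (partialD i w) x :=
    fun x hx i => (cw1 x hx i).differentiableAt (by norm_num)
  have dw2 : ∀ x ∈ U, ∀ i j, DifferentiableAt ℝ (partialD i (partialD j w)) x :=
    fun x hx i j => ((cw1 x hx j).partialD (m := 1) (by norm_num) i).differentiableAt (by norm_num)
  have dy1 : ∀ x ∈ U, ∀ i, DifferentiableAt ℝ (partialD i y) x :=
    fun x hx i => ((hy x hx).partialD (m := 1) (by norm_num) i).differentiableAt (by norm_num)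
  have near : ∀ {f g : EuclideanSpace ℝ (Fin N) → ℝ}, (∀ x ∈ U, f x = g x) → ∀ x ∈ U,
      f =ᶠ[𝓝 x] g := fun h x hx => Filter.eventually_of_mem (hU.mem_nhds hx) h
  have symm : ∀ x ∈ U, ∀ i j, partialD i (partialD j w) x = partialD j (partialD i w) x :=
    fun x hx i j => partialD_comm ((hw x hx).of_le (by norm_num)) i j
  have symm3 : ∀ i k, partialD k (partialD i (partialD i w)) x
      = partialD i (partialD i (partialD k w)) x := by
    intro i k
    rw [partialD_comm (cw1 x hx i)]
    exact partialD_congr (near (fun x hx => symm x hx k i) x hx) i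
  have R1 : ∀ x ∈ U, ∀ i, Real.exp (y x) * partialD i y x
      = ∑ j, (partialD j w x * partialD i (partialD j w) x
        + partialD j w x * partialD i (partialD j w) x) := by
    intro x hx i
    rw [← partialD_exp (dy x hx), partialD_congr (near hyw x hx),
      partialD_sum fun j => (dw1 x hx j).fun_mul (dw1 x hx j)]
    exact Finset.sum_congr rfl fun j _ => partialD_mul (dw1 x hx j) (dw1 x hx j) i
  have R2 : ∀ i, Real.exp (y x) * partialD i (partialD i y) x
        + partialD i y x * (Real.exp (y x) * partialD i y x)
      = ∑ j, 2 * (partialD j w x * partialD i (partialD i (partialD j w)) x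
        + partialD i (partialD j w) x * partialD i (partialD j w) x) := by
    intro i
    rw [← partialD_exp (dy x hx), ← partialD_mul (dy x hx).exp (dy1 x hx i),
      partialD_congr (near (fun x hx => R1 x hx i) x hx),
      partialD_sum fun j =>
        ((dw1 x hx j).fun_mul (dw2 x hx i j)).fun_add ((dw1 x hx j).fun_mul (dw2 x hx i j))]
    refine Finset.sum_congr rfl fun j _ => ?_
    rw [partialD_add ((dw1 x hx j).fun_mul (dw2 x hx i j)) ((dw1 x hx j).fun_mul (dw2 x hx i j)),
      partialD_mul (dw1 x hx j) (dw2 x hx i j)]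
    ring
  have R3 : ∀ k, ∑ i, partialD i (partialD i (partialD k w)) x
        + (p - 2) / 2 * ∑ i, (partialD i y x * partialD k (partialD i w) x
          + partialD i w x * partialD k (partialD i y) x)
      = Real.exp (s * w x + (s + 1) / 2 * y x) * (s * partialD k w x + (s + 1) / 2 * partialD k y x)
        - (p - 1) * (Real.exp (y x) * partialD k y x) := by
    intro k
    have h := partialD_congr (near heq x hx) k
    have d1 : DifferentiableAt ℝ (fun x => s * w x + (s + 1) / 2 * y x) x :=
      ((dw x hx).const_mul _).add ((dy x hx).const_mul _)
    have d2 : ∀ i, DifferentiableAt ℝ (fun x => partialD i y x * partialD i w x) x :=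
      fun i => (dy1 x hx i).mul (dw1 x hx i)
    have d3 : DifferentiableAt ℝ (fun x => ∑ i, partialD i y x * partialD i w x) x :=
      DifferentiableAt.fun_sum fun i _ => d2 i
    have d4 : DifferentiableAt ℝ (fun x => ∑ i, partialD i (partialD i w) x) x :=
      DifferentiableAt.fun_sum fun i _ => dw2 x hx i i
    rw [partialD_add d4 (d3.const_mul _), partialD_sum fun i => dw2 x hx i i,
      partialD_const_mul _ d3, partialD_sum d2, partialD_sub d1.exp ((dy x hx).exp.const_mul _),
      partialD_exp d1, partialD_const_mul _ (dy x hx).exp, partialD_exp (dy x hx),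
      partialD_add ((dw x hx).const_mul _) ((dy x hx).const_mul _), partialD_const_mul _ (dw x hx),
      partialD_const_mul _ (dy x hx)] at h
    rw [← h]
    congr 1
    · exact Finset.sum_congr rfl fun i _ => (symm3 i k).symm
    · congr 1
      exact Finset.sum_congr rfl fun i _ => (partialD_mul (dy1 x hx i) (dw1 x hx i) k).symm
  have hz := hyw x hx
  have R1x := R1 x hx
  have symmx := symm x hx
  generalize Real.exp (s * w x + (s + 1) / 2 * y x) = A at *
  generalize Real.exp (y x) = z at *
  have S2 : z * ∑ i, partialD i (partialD i y) x + z * ∑ i, partialD i y x ^ 2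
      = 2 * ∑ i, ∑ j, partialD j w x * partialD i (partialD i (partialD j w)) x
        + 2 * ∑ i, ∑ j, partialD i (partialD j w) x ^ 2 := by
    simp only [Finset.mul_sum, ← Finset.sum_add_distrib]
    refine Finset.sum_congr rfl fun i _ => ?_
    have := R2 i
    calc _ = _ := by linear_combination this
      _ = _ := Finset.sum_congr rfl fun j _ => by ring
  have S3 : ∑ i, ∑ j, partialD j w x * partialD i (partialD i (partialD j w)) x
      + (p - 2) / 2 * (z / 2 * ∑ i, partialD i y x ^ 2
        + ∑ i, ∑ j, partialD i (partialD j y) x * partialD i w x * partialD j w x)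
      = A * (s * z + (s + 1) / 2 * ∑ i, partialD i y x * partialD i w x)
        - (p - 1) * (z * ∑ i, partialD i y x * partialD i w x) := by
    have e1 : ∑ k, partialD k w x * (∑ i, partialD i (partialD i (partialD k w)) x
        + (p - 2) / 2 * ∑ i, (partialD i y x * partialD k (partialD i w) x
          + partialD i w x * partialD k (partialD i y) x)) =
        ∑ k, partialD k w x * (A * (s * partialD k w x + (s + 1) / 2 * partialD k y x)
        - (p - 1) * (z * partialD k y x)) :=
      Finset.sum_congr rfl fun k _ => by rw [R3 k]
    have e2 : ∑ k, partialD k w x * (A * (s * partialD k w x + (s + 1) / 2 * partialD k y x)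
        - (p - 1) * (z * partialD k y x)) =
        A * (s * z + (s + 1) / 2 * ∑ i, partialD i y x * partialD i w x)
        - (p - 1) * (z * ∑ i, partialD i y x * partialD i w x) := by
      rw [hz]
      simp only [Finset.mul_sum, ← Finset.sum_add_distrib, ← Finset.sum_sub_distrib]
      exact Finset.sum_congr rfl fun k _ => by ring
    have e3 : z / 2 * ∑ i, partialD i y x ^ 2
        = ∑ k, ∑ i, partialD k w x * (partialD i y x * partialD k (partialD i w) x) := by
      rw [Finset.sum_comm, Finset.mul_sum]
      refine Finset.sum_congr rfl fun i _ => ?_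
      calc _ = partialD i y x / 2 * (z * partialD i y x) := by ring
        _ = _ := by
          rw [R1x i, Finset.mul_sum]
          exact Finset.sum_congr rfl fun j _ => by rw [symmx j i]; ring
    rw [← e2, ← e1, e3, Finset.sum_comm (f := fun i j =>
      partialD j w x * partialD i (partialD i (partialD j w)) x)]
    simp only [Finset.mul_sum, ← Finset.sum_add_distrib, mul_add]
    exact Finset.sum_congr rfl fun k _ => Finset.sum_congr rfl fun i _ => by ring
  have S4 : (∑ i, partialD i (partialD i w) x) ^ 2 / N
      ≤ ∑ i, ∑ j, partialD i (partialD j w) x ^ 2 := by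
    have hN' : (0 : ℝ) < N := by exact_mod_cast hN
    rw [div_le_iff₀ hN']
    have h1 := sq_sum_le_card_mul_sum_sq (s := (Finset.univ : Finset (Fin N)))
      (f := fun i => partialD i (partialD i w) x)
    have h2 : ∑ i, partialD i (partialD i w) x ^ 2
        ≤ ∑ i, ∑ j, partialD i (partialD j w) x ^ 2 :=
      Finset.sum_le_sum fun i _ => Finset.single_le_sum
        (f := fun j => partialD i (partialD j w) x ^ 2) (fun j _ => sq_nonneg _)
        (Finset.mem_univ i)
    simp only [Finset.card_univ, Fintype.card_fin] at h1
    nlinarith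
  have e : 2 / (N : ℝ) * (∑ i, partialD i (partialD i w) x) ^ 2
      = 2 * ((∑ i, partialD i (partialD i w) x) ^ 2 / N) := by ring
  rw [e]
  linarith

lemma IsLocalMax.deriv_deriv_nonpos {φ : ℝ → ℝ} {t : ℝ} (hm : IsLocalMax φ t)
    (hc : ContinuousAt φ t) : deriv (deriv φ) t ≤ 0 := by
  by_contra! hpos
  have hmin := isLocalMin_of_deriv_deriv_pos hpos hm.deriv_eq_zero hc
  have hconst : φ =ᶠ[𝓝 t] fun _ => φ t := by
    filter_upwards [hm, hmin] with r h1 h2 using le_antisymm h1 h2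
  have h0 : deriv (deriv φ) t = 0 := by
    rw [hconst.deriv.deriv_eq]
    simp
  linarith

lemma IsLocalMax.sum_partialD_partialD_nonpos {N : ℕ} {h : EuclideanSpace ℝ (Fin N) → ℝ}
    {x : EuclideanSpace ℝ (Fin N)} (hm : IsLocalMax h x) (hc : ContDiffAt ℝ 2 h x)
    (v : Fin N → ℝ) : ∑ i, ∑ j, partialD i (partialD j h) x * v i * v j ≤ 0 := by
  set V : EuclideanSpace ℝ (Fin N) := WithLp.toLp 2 v with hV
  have hl : ∀ t : ℝ, HasDerivAt (fun t : ℝ => x + t • V) V t := fun t => by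
    simpa using ((hasDerivAt_id t).smul_const V).const_add x
  have hx0 : x + (0 : ℝ) • V = x := by simp
  have hcont : Tendsto (fun t : ℝ => x + t • V) (𝓝 0) (𝓝 x) := by
    simpa [hx0] using (hl 0).continuousAt.tendsto
  have hd : ∀ᶠ z in 𝓝 x, DifferentiableAt ℝ h z := by
    filter_upwards [hc.eventually (by simp)] with z hz using hz.differentiableAt (by norm_num)
  have h1 : deriv (fun t : ℝ => h (x + t • V)) =ᶠ[𝓝 0]
      fun t => ∑ j, v j * partialD j h (x + t • V) := by
    filter_upwards [hcont.eventually hd] with t ht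
    rw [← fderiv_apply_eq_sum_partialD]
    exact (ht.hasFDerivAt.comp_hasDerivAt t (hl t)).deriv
  have h2 : deriv (deriv (fun t : ℝ => h (x + t • V))) 0
      = ∑ j, v j * ∑ i, v i * partialD i (partialD j h) x := by
    rw [h1.deriv_eq]
    refine HasDerivAt.deriv (HasDerivAt.fun_sum fun j _ => HasDerivAt.const_mul _ ?_)
    have h3 : HasFDerivAt (partialD j h) (fderiv ℝ (partialD j h) x) (x + (0 : ℝ) • V) := by
      rw [hx0]
      exact ((hc.partialD (m := 1) (by norm_num) j).differentiableAt (by norm_num)).hasFDerivAt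
    have h4 := h3.comp_hasDerivAt (0 : ℝ) (hl 0)
    rwa [fderiv_apply_eq_sum_partialD] at h4
  have hm' : IsLocalMax (fun t : ℝ => h (x + t • V)) 0 := by
    have := hcont.eventually hm
    simpa [IsLocalMax, IsMaxFilter] using this
  have hcφ : ContinuousAt (fun t : ℝ => h (x + t • V)) 0 :=
    ContinuousAt.comp (by rw [hx0]; exact hc.continuousAt) (hl 0).continuousAt
  have := hm'.deriv_deriv_nonpos hcφ
  rw [h2] at this
  convert this using 1
  rw [Finset.sum_comm]
  refine Finset.sum_congr rfl fun j _ => ?_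
  rw [Finset.mul_sum]
  exact Finset.sum_congr rfl fun i _ => by ring

/-- If the quadratic form of `H` is bounded above by `v ↦ B |v|²`, then the contraction of `H` with
the positive matrix `|w|² I + (p - 2) w ⊗ w` is at most `B` times the trace of this matrix. -/
lemma contraction_le {N : ℕ} {p : ℝ} (hp : 1 < p) (H : Fin N → Fin N → ℝ) (w : Fin N → ℝ)
    {z B : ℝ} (hz : 0 < z) (hzw : z = ∑ i, w i * w i)
    (hH : ∀ v : Fin N → ℝ, ∑ i, ∑ j, H i j * v i * v j ≤ B * ∑ i, v i * v i) :
    z * ∑ i, H i i + (p - 2) * ∑ i, ∑ j, H i j * w i * w j ≤ B * (N + p - 2) * z := by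
  set c : ℝ := (√(p - 1) - 1) / z with hc
  have hcc : 2 * c + c ^ 2 * z = (p - 2) / z := by
    have : √(p - 1) ^ 2 = p - 1 := Real.sq_sqrt (by linarith)
    rw [hc]
    field_simp
    linear_combination this
  have hk := Finset.sum_le_sum fun (k : Fin N) (_ : k ∈ Finset.univ) =>
    hH fun i => (if i = k then 1 else 0) + c * w k * w i
  have e1 : ∀ k, ∑ i, ((if i = k then 1 else 0) + c * w k * w i)
      * ((if i = k then 1 else 0) + c * w k * w i)
      = 1 + 2 * c * (w k * w k) + c ^ 2 * z * (w k * w k) := by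
    intro k
    calc _ = ∑ i, ((if i = k then 1 + 2 * c * w k * w i else 0)
          + c ^ 2 * (w k * w k) * (w i * w i)) :=
        Finset.sum_congr rfl fun i _ => by split_ifs <;> ring
      _ = _ := by
        rw [Finset.sum_add_distrib, ← Finset.mul_sum, ← hzw]
        simp
        ring
  have e2 : ∀ k, ∑ i, ∑ j, H i j * ((if i = k then 1 else 0) + c * w k * w i)
      * ((if j = k then 1 else 0) + c * w k * w j)
      = H k k + c * ∑ j, H k j * w k * w j + c * ∑ i, H i k * w i * w k
        + c ^ 2 * (w k * w k) * ∑ i, ∑ j, H i j * w i * w j := by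
    intro k
    calc _ = ∑ i, ∑ j, ((if i = k then (if j = k then H i j else 0) else 0)
          + (if i = k then c * (H i j * w k * w j) else 0)
          + (if j = k then c * (H i j * w i * w k) else 0)
          + c ^ 2 * (w k * w k) * (H i j * w i * w j)) :=
        Finset.sum_congr rfl fun i _ => Finset.sum_congr rfl fun j _ => by split_ifs <;> ring
      _ = _ := by
        simp only [Finset.sum_add_distrib, ← Finset.mul_sum]
        congr 1
        congr 1
        · congr 1
          · rw [Finset.sum_eq_single k (by intro b _ hb; simp [hb]) (by simp)]
            simp
          · rw [Finset.sum_eq_single k (by intro b _ hb; simp [hb]) (by simp)]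
            simp [Finset.mul_sum]
        · simp [Finset.mul_sum]
  simp only [e1, e2, Finset.sum_add_distrib, ← Finset.mul_sum, ← Finset.sum_mul, ← hzw] at hk
  have e5 : ∑ k, (∑ i, H i k * w i) * w k = ∑ i, ∑ j, H i j * w i * w j := by
    simp only [Finset.sum_mul]
    exact Finset.sum_comm
  rw [e5] at hk
  simp only [Finset.sum_const, Finset.card_univ, Fintype.card_fin, nsmul_eq_mul, mul_one] at hk
  set S := ∑ i, ∑ j, H i j * w i * w j
  have e3 : z * ∑ i, H i i + (p - 2) * S
      = z * (∑ i, H i i + c * S + c * S + c ^ 2 * z * S) := by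
    have : (p - 2) = z * (2 * c + c ^ 2 * z) := by rw [hcc]; field_simp
    rw [this]
    ring
  have e4 : B * (N + p - 2) * z = z * (B * (N + 2 * c * z + c ^ 2 * z * z)) := by
    have : (p - 2) = z * (2 * c + c ^ 2 * z) := by rw [hcc]; field_simp
    linear_combination (B * z) * this
  rw [e3, e4]
  exact mul_le_mul_of_nonneg_left hk hz.le

/-- The elementary coercivity estimate behind the gradient bound. -/
lemma exists_coercive {N p s : ℝ} (hN : 0 < N) (hp : 1 < p) (hs : 0 < s) :
    ∃ c C : ℝ, 0 < c ∧ 0 < C ∧ ∀ α δ : ℝ, 0 ≤ α →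
      c - C * δ ^ 2 ≤ 2 / N * (α - (p - 1) - (p - 2) / 2 * δ) ^ 2 + 2 * s * α
        + ((s + 1) * α - 2 * (p - 1)) * δ := by
  set m := p - 1 with hm
  have hm0 : 0 < m := by linarith
  obtain ⟨k, hk0, hkN, hks⟩ : ∃ k : ℝ, 0 < k ∧ k ≤ 1 / N ∧ k * m ≤ s := by
    refine ⟨min (1 / N) (s / m), lt_min (by positivity) (by positivity), min_le_left _ _, ?_⟩
    calc _ ≤ s / m * m := by gcongr; exact min_le_right _ _
      _ = s := by field_simp
  refine ⟨k * m ^ 2 / 2, 1 + 2 / N * ((p - 2) / 2) ^ 2 + (s + 1) ^ 2 / (4 * k) + 2 / k,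
    by positivity, by positivity, fun α δ hα => ?_⟩
  have a1 : 1 / N * (α - m) ^ 2 - 2 / N * ((p - 2) / 2) ^ 2 * δ ^ 2
      ≤ 2 / N * (α - m - (p - 2) / 2 * δ) ^ 2 := by
    have : 0 ≤ 1 / N * ((α - m) - (p - 2) * δ) ^ 2 := by positivity
    have h2 : 2 / N = 2 * (1 / N) := by ring
    rw [h2]
    nlinarith
  have a2 : k * (α - m) ^ 2 ≤ 1 / N * (α - m) ^ 2 := by gcongr
  have a3 : 0 ≤ (s - k * m) * α := mul_nonneg (by linarith) hα
  have a4 : -(k * α ^ 2) - (s + 1) ^ 2 / (4 * k) * δ ^ 2 ≤ (s + 1) * α * δ := by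
    have h : 0 ≤ k * (α + (s + 1) / (2 * k) * δ) ^ 2 := by positivity
    have e : k * (α + (s + 1) / (2 * k) * δ) ^ 2
      = k * α ^ 2 + (s + 1) * α * δ + (s + 1) ^ 2 / (4 * k) * δ ^ 2 := by
      field_simp
      ring
    linarith
  have a5 : -(k * m ^ 2 / 2) - 2 / k * δ ^ 2 ≤ - (2 * m * δ) := by
    have h : 0 ≤ k / 2 * (m - 2 / k * δ) ^ 2 := by positivity
    have e : k / 2 * (m - 2 / k * δ) ^ 2 = k * m ^ 2 / 2 - 2 * m * δ + 2 / k * δ ^ 2 := by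
      field_simp
      ring
    linarith
  nlinarith [sq_nonneg δ]

lemma partialD_inv {N : ℕ} {f : EuclideanSpace ℝ (Fin N) → ℝ} {x : EuclideanSpace ℝ (Fin N)}
    (hf : DifferentiableAt ℝ f x) (h0 : f x ≠ 0) (i : Fin N) :
    partialD i (fun y => (f y)⁻¹) x = -(f x ^ 2)⁻¹ * partialD i f x := by
  have h := ((hasDerivAt_inv h0).comp_hasFDerivAt x hf.hasFDerivAt).partialD_eq i
  simpa [partialD, Function.comp_def] using h

lemma partialD_coord_sub {N : ℕ} (a x : EuclideanSpace ℝ (Fin N)) (i j : Fin N) :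
    partialD i (fun z : EuclideanSpace ℝ (Fin N) => z j - a j) x = if i = j then 1 else 0 := by
  have h : HasFDerivAt (fun z : EuclideanSpace ℝ (Fin N) => z j - a j)
      (EuclideanSpace.proj j : EuclideanSpace ℝ (Fin N) →L[ℝ] ℝ) x :=
    (EuclideanSpace.proj (𝕜 := ℝ) j).hasFDerivAt.sub_const (a j)
  rw [h.partialD_eq i]
  simp [eq_comm]

lemma partialD_sq_sub_norm_sq {N : ℕ} (a x : EuclideanSpace ℝ (Fin N)) (R : ℝ) (i : Fin N) :
    partialD i (fun z => R ^ 2 - ‖z - a‖ ^ 2) x = -2 * (x i - a i) := by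
  have h := (((hasFDerivAt_id x).sub_const a).norm_sq.const_sub (R ^ 2)).partialD_eq i
  simp only [id] at h
  rw [h]
  simp [EuclideanSpace.inner_single_right]

/-- The derivatives of `y` at a local maximum of `y + 2 log (R² - |x - a|²)`. -/
lemma partialD_of_isLocalMax_add_log {N : ℕ} {y : EuclideanSpace ℝ (Fin N) → ℝ}
    {a x : EuclideanSpace ℝ (Fin N)} {R : ℝ} (hy : ContDiffAt ℝ 2 y x)
    (hρ : 0 < R ^ 2 - ‖x - a‖ ^ 2)
    (hm : IsLocalMax (fun z => y z + 2 * Real.log (R ^ 2 - ‖z - a‖ ^ 2)) x) :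
    ∑ i, partialD i y x ^ 2 ≤ 16 * (R ^ 2 / (R ^ 2 - ‖x - a‖ ^ 2) ^ 2) ∧
    ∀ v : Fin N → ℝ, ∑ i, ∑ j, partialD i (partialD j y) x * v i * v j
      ≤ 12 * (R ^ 2 / (R ^ 2 - ‖x - a‖ ^ 2) ^ 2) * ∑ i, v i * v i := by
  set ρ : EuclideanSpace ℝ (Fin N) → ℝ := fun z => R ^ 2 - ‖z - a‖ ^ 2 with hρdef
  change IsLocalMax (fun z => y z + 2 * Real.log (ρ z)) x at hm
  have hρx : R ^ 2 - ‖x - a‖ ^ 2 = ρ x := rfl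
  rw [hρx] at hρ ⊢
  have hρc : ContDiff ℝ 2 ρ := contDiff_const.sub ((contDiff_id.sub contDiff_const).norm_sq ℝ)
  have hρd : ∀ z, DifferentiableAt ℝ ρ z := fun z => hρc.differentiable (by norm_num) z
  have hcd : ∀ z j, DifferentiableAt ℝ (fun z : EuclideanSpace ℝ (Fin N) => z j - a j) z :=
    fun z j => ((EuclideanSpace.proj (𝕜 := ℝ) j).differentiableAt).sub_const (a j)
  have hhc : ContDiffAt ℝ 2 (fun z => y z + 2 * Real.log (ρ z)) x :=
    hy.add (contDiffAt_const.mul (hρc.contDiffAt.log hρ.ne'))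
  have hnear : ∀ j, partialD j (fun z => y z + 2 * Real.log (ρ z)) =ᶠ[𝓝 x]
      fun z => partialD j y z - 4 * ((ρ z)⁻¹ * (z j - a j)) := by
    intro j
    filter_upwards [hy.eventually (by simp),
      hρc.continuous.continuousAt.eventually_ne hρ.ne'] with z hz hz'
    have hyz : DifferentiableAt ℝ y z := hz.differentiableAt (by norm_num)
    rw [partialD_add hyz (((hρd z).log hz').const_mul 2),
      partialD_const_mul _ ((hρd z).log hz'), partialD_log (hρd z) hz',
      partialD_sq_sub_norm_sq]
    ring
  have h1 : ∀ i, partialD i y x = 4 * ((ρ x)⁻¹ * (x i - a i)) := by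
    intro i
    have := (hnear i).eq_of_nhds
    rw [partialD, hm.fderiv_eq_zero] at this
    simp only [_root_.zero_apply] at this
    linarith
  have h2 : ∀ i j, partialD i (partialD j (fun z => y z + 2 * Real.log (ρ z))) x
      = partialD i (partialD j y) x
        - 4 * ((ρ x)⁻¹ * (if i = j then 1 else 0)
          + 2 * (ρ x ^ 2)⁻¹ * ((x i - a i) * (x j - a j))) := by
    intro i j
    have hyd : DifferentiableAt ℝ (partialD j y) x :=
      (hy.partialD (m := 1) (by norm_num) j).differentiableAt (by norm_num)
    have hi := (hρd x).fun_inv hρ.ne'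
    rw [partialD_congr (hnear j), partialD_sub hyd ((hi.fun_mul (hcd x j)).const_mul 4),
      partialD_const_mul _ (hi.fun_mul (hcd x j)), partialD_mul hi (hcd x j),
      partialD_inv (hρd x) hρ.ne', partialD_coord_sub, partialD_sq_sub_norm_sq]
    ring
  have hX : ∑ i, (x i - a i) ^ 2 = ‖x - a‖ ^ 2 := by
    simp [EuclideanSpace.norm_sq_eq]
  have hXR : ∑ i, (x i - a i) ^ 2 ≤ R ^ 2 := by
    rw [hX]
    linarith
  have hρR : ρ x ≤ R ^ 2 := by
    have := sq_nonneg ‖x - a‖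
    linarith
  constructor
  · calc _ = 16 * ((∑ i, (x i - a i) ^ 2) / ρ x ^ 2) := by
          rw [Finset.sum_div, Finset.mul_sum]
          refine Finset.sum_congr rfl fun i _ => ?_
          rw [h1]
          field_simp
          ring
      _ ≤ _ := by gcongr
  · intro v
    have h3 := hm.sum_partialD_partialD_nonpos hhc v
    simp only [h2] at h3
    have e : ∑ i, ∑ j, (partialD i (partialD j y) x
        - 4 * ((ρ x)⁻¹ * (if i = j then 1 else 0)
          + 2 * (ρ x ^ 2)⁻¹ * ((x i - a i) * (x j - a j)))) * v i * v j
        = ∑ i, ∑ j, partialD i (partialD j y) x * v i * v j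
          - (4 * (ρ x)⁻¹ * ∑ i, v i * v i
            + 8 * (ρ x ^ 2)⁻¹ * (∑ i, (x i - a i) * v i) ^ 2) := by
      rw [sq (∑ i, (x i - a i) * v i), Finset.sum_mul_sum]
      simp only [Finset.mul_sum, ← Finset.sum_add_distrib, ← Finset.sum_sub_distrib]
      refine Finset.sum_congr rfl fun i _ => ?_
      have : 4 * (ρ x)⁻¹ * (v i * v i)
          = ∑ j, 4 * (ρ x)⁻¹ * (if i = j then v i * v j else 0) := by
        rw [← Finset.mul_sum]
        simp
      rw [this, ← Finset.sum_add_distrib, ← Finset.sum_sub_distrib]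
      exact Finset.sum_congr rfl fun j _ => by split_ifs <;> ring
    rw [e] at h3
    have hv : ∑ i, v i * v i = ∑ i, v i ^ 2 := Finset.sum_congr rfl fun i _ => (sq _).symm
    have hv0 : 0 ≤ ∑ i, v i ^ 2 := Finset.sum_nonneg fun i _ => sq_nonneg _
    have hcs := Finset.sum_mul_sq_le_sq_mul_sq Finset.univ (fun i => x i - a i) v
    have b1 : (ρ x)⁻¹ ≤ R ^ 2 / ρ x ^ 2 := by
      rw [inv_eq_one_div, div_le_div_iff₀ hρ (by positivity)]
      nlinarith
    have b2 : (ρ x ^ 2)⁻¹ * (∑ i, (x i - a i) * v i) ^ 2 ≤ R ^ 2 / ρ x ^ 2 * ∑ i, v i ^ 2 := by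
      calc _ ≤ (ρ x ^ 2)⁻¹ * (R ^ 2 * ∑ i, v i ^ 2) := by
            gcongr
            exact hcs.trans (by gcongr)
        _ = _ := by ring
    have b3 := mul_le_mul_of_nonneg_right b1 hv0
    rw [hv] at h3 ⊢
    linarith

/-- Bound for `|∇w|²` at an interior maximum of `(R² - |x - a|²)² |∇w|²`. -/
lemma exists_gradient_bound_at_max {N : ℕ} (hN : 0 < N) {p s : ℝ} (hp : 1 < p) (hs : 0 < s) :
    ∃ K : ℝ, 0 < K ∧ ∀ (w y : EuclideanSpace ℝ (Fin N) → ℝ) (U : Set (EuclideanSpace ℝ (Fin N))),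
      IsOpen U → (∀ x ∈ U, ContDiffAt ℝ 3 w x) → (∀ x ∈ U, ContDiffAt ℝ 2 y x) →
      (∀ x ∈ U, Real.exp (y x) = ∑ i, partialD i w x * partialD i w x) →
      (∀ x ∈ U, ∑ i, partialD i (partialD i w) x
          + (p - 2) / 2 * ∑ i, partialD i y x * partialD i w x
        = Real.exp (s * w x + (s + 1) / 2 * y x) - (p - 1) * Real.exp (y x)) →
      ∀ x ∈ U, ∀ (a : EuclideanSpace ℝ (Fin N)) (R : ℝ), 0 < R ^ 2 - ‖x - a‖ ^ 2 →
        IsLocalMax (fun z => y z + 2 * Real.log (R ^ 2 - ‖z - a‖ ^ 2)) x →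
        (R ^ 2 - ‖x - a‖ ^ 2) ^ 2 * Real.exp (y x) ≤ K * R ^ 2 := by
  have hN' : (0 : ℝ) < N := by exact_mod_cast hN
  have hN1 : (1 : ℝ) ≤ N := by exact_mod_cast hN
  obtain ⟨c, C, hc, hC, hcoer⟩ := exists_coercive hN' hp hs
  refine ⟨(12 * (N + p - 2) + 16 * (C + p / 2)) / c, by
    have : 0 < (N : ℝ) + p - 2 := by linarith
    positivity, ?_⟩
  intro w y U hU hw hy hyw heq x hx a R hρ hm
  obtain ⟨hG, hH⟩ := partialD_of_isLocalMax_add_log (hy x hx) hρ hm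
  have hz := Real.exp_pos (y x)
  have hcon := contraction_le hp (fun i j => partialD i (partialD j y) x)
    (fun i => partialD i w x) hz (hyw x hx) hH
  have hboc := bochner_log_gradient hN p s hU hw hy hyw heq hx
  have hT : ∑ i, partialD i (partialD i w) x
      = Real.exp (s * w x + (s + 1) / 2 * y x) - (p - 1) * Real.exp (y x)
        - (p - 2) / 2 * ∑ i, partialD i y x * partialD i w x := by
    linarith [heq x hx]
  have hcs := Finset.sum_mul_sq_le_sq_mul_sq Finset.univ (fun i => partialD i y x)
    (fun i => partialD i w x)
  have hzz : ∑ i, partialD i w x ^ 2 = Real.exp (y x) := by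
    rw [hyw x hx]
    exact Finset.sum_congr rfl fun i _ => sq _
  have hA := Real.exp_pos (s * w x + (s + 1) / 2 * y x)
  rw [hzz] at hcs
  rw [hT] at hboc
  generalize Real.exp (s * w x + (s + 1) / 2 * y x) = A at *
  generalize Real.exp (y x) = z at *
  generalize R ^ 2 - ‖x - a‖ ^ 2 = ρ at *
  generalize ∑ i, partialD i y x * partialD i w x = D at *
  generalize ∑ i, partialD i y x ^ 2 = G at *
  have h1 := mul_le_mul_of_nonneg_left (hcoer (A / z) (D / z) (by positivity)) (sq_nonneg z)
  have e1 : z ^ 2 * (2 / N * (A / z - (p - 1) - (p - 2) / 2 * (D / z)) ^ 2 + 2 * s * (A / z)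
      + ((s + 1) * (A / z) - 2 * (p - 1)) * (D / z))
      = 2 / N * (A - (p - 1) * z - (p - 2) / 2 * D) ^ 2 + 2 * s * A * z
      + ((s + 1) * A - 2 * (p - 1) * z) * D := by
    field_simp
  have e2 : z ^ 2 * (c - C * (D / z) ^ 2) = z ^ 2 * c - C * D ^ 2 := by
    field_simp
  rw [e1, e2] at h1
  have h2 : z * (z * c) ≤ z * ((12 * (N + p - 2) + 16 * (C + p / 2)) * (R ^ 2 / ρ ^ 2)) := by
    have h3 : (C + p / 2) * (G * z) ≤ (C + p / 2) * (16 * (R ^ 2 / ρ ^ 2) * z) := by gcongr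
    have h4 : C * D ^ 2 ≤ C * (G * z) := by gcongr
    linarith
  have h3 := le_of_mul_le_mul_left h2 hz
  rw [div_mul_eq_mul_div, le_div_iff₀ hc]
  calc ρ ^ 2 * z * c = ρ ^ 2 * (z * c) := by ring
    _ ≤ ρ ^ 2 * ((12 * (N + p - 2) + 16 * (C + p / 2)) * (R ^ 2 / ρ ^ 2)) := by gcongr
    _ = _ := by field_simp

lemma gradient_coord {N : ℕ} (u : EuclideanSpace ℝ (Fin N) → ℝ) (x : EuclideanSpace ℝ (Fin N))
    (i : Fin N) : gradient u x i = partialD i u x := by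
  have h : inner ℝ (gradient u x) (EuclideanSpace.single i (1 : ℝ)) = partialD i u x :=
    inner_gradient_left
  rw [← h, EuclideanSpace.inner_single_right]
  simp

lemma trace_fderiv_eq_sum_partialD {N : ℕ}
    {F : EuclideanSpace ℝ (Fin N) → EuclideanSpace ℝ (Fin N)} {x : EuclideanSpace ℝ (Fin N)}
    (hF : DifferentiableAt ℝ F x) :
    LinearMap.trace ℝ (EuclideanSpace ℝ (Fin N))
      (fderiv ℝ F x : EuclideanSpace ℝ (Fin N) →ₗ[ℝ] EuclideanSpace ℝ (Fin N))
      = ∑ i, partialD i (fun z => F z i) x := by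
  rw [LinearMap.trace_eq_sum_inner _ (EuclideanSpace.basisFun (Fin N) ℝ)]
  refine Finset.sum_congr rfl fun i _ => ?_
  have h := (((EuclideanSpace.proj (𝕜 := ℝ) i).hasFDerivAt (x := F x)).comp x
    hF.hasFDerivAt).partialD_eq i
  refine Eq.trans ?_ h.symm
  simp [EuclideanSpace.inner_single_left]

lemma sum_partialD_sq_eq {N : ℕ} (w : EuclideanSpace ℝ (Fin N) → ℝ)
    (x : EuclideanSpace ℝ (Fin N)) :
    ∑ i, partialD i w x * partialD i w x = ‖gradient w x‖ ^ 2 := by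
  simp only [EuclideanSpace.norm_sq_eq, gradient_coord, Real.norm_eq_abs, sq_abs]
  exact Finset.sum_congr rfl fun i _ => (sq _).symm

section StrongSolution

variable {N : ℕ} {p q : ℝ} {Ω : Set (EuclideanSpace ℝ (Fin N))}
  {u : EuclideanSpace ℝ (Fin N) → ℝ}

lemma partialD_log_comp (hΩ : IsOpen Ω) (hu : ContDiffOn ℝ 1 u Ω) (hpos : ∀ x ∈ Ω, 0 < u x)
    {x : EuclideanSpace ℝ (Fin N)} (hx : x ∈ Ω) (i : Fin N) :
    partialD i u x = u x * partialD i (fun z => Real.log (u z)) x := by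
  have hd : DifferentiableAt ℝ u x :=
    (hu.contDiffAt (hΩ.mem_nhds hx)).differentiableAt (by norm_num)
  have := (hpos x hx).ne'
  rw [partialD_log hd this]
  field_simp

lemma continuousOn_gradient (hΩ : IsOpen Ω) (hu : ContDiffOn ℝ 1 u Ω) :
    ContinuousOn (gradient u) Ω :=
  (InnerProductSpace.toDual ℝ _).symm.continuous.comp_continuousOn
    (hu.continuousOn_fderiv_of_isOpen hΩ (by norm_num))

lemma isOpen_gradient_ne_zero (hΩ : IsOpen Ω) (hu : ContDiffOn ℝ 1 u Ω) :
    IsOpen {x | x ∈ Ω ∧ gradient u x ≠ 0} :=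
  (continuousOn_gradient hΩ hu).isOpen_inter_preimage hΩ isOpen_ne

lemma norm_gradient_eq (hΩ : IsOpen Ω) (hu : ContDiffOn ℝ 1 u Ω) (hpos : ∀ x ∈ Ω, 0 < u x)
    {x : EuclideanSpace ℝ (Fin N)} (hx : x ∈ Ω) :
    ‖gradient u x‖ = u x * ‖gradient (fun z => Real.log (u z)) x‖ := by
  have h : gradient u x = u x • gradient (fun z => Real.log (u z)) x := by
    ext i
    simp [gradient_coord, partialD_log_comp hΩ hu hpos hx]
  rw [h, norm_smul, Real.norm_of_nonneg (hpos x hx).le]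

/-- The equation satisfied by `log u`, where `u` is a positive strong solution of `(E)`. -/
lemma IsStrongSolution.log_equation (hΩ : IsOpen Ω) (hu : IsStrongSolution p q Ω u)
    (hpos : ∀ x ∈ Ω, 0 < u x) {w y : EuclideanSpace ℝ (Fin N) → ℝ}
    (hw : w = fun z => Real.log (u z))
    (hy : y = fun z => Real.log (∑ i, partialD i w z * partialD i w z)) :
    (∀ x ∈ {x | x ∈ Ω ∧ gradient u x ≠ 0}, ContDiffAt ℝ 3 w x) ∧
    (∀ x ∈ {x | x ∈ Ω ∧ gradient u x ≠ 0}, ContDiffAt ℝ 2 y x) ∧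
    (∀ x ∈ {x | x ∈ Ω ∧ gradient u x ≠ 0},
      Real.exp (y x) = ∑ i, partialD i w x * partialD i w x) ∧
    ∀ x ∈ {x | x ∈ Ω ∧ gradient u x ≠ 0}, ∑ i, partialD i (partialD i w) x
        + (p - 2) / 2 * ∑ i, partialD i y x * partialD i w x
      = Real.exp ((q - p + 1) * w x + (q - p + 1 + 1) / 2 * y x) - (p - 1) * Real.exp (y x) := by
  obtain ⟨hu1, hu3, hdiv⟩ := hu
  set U : Set (EuclideanSpace ℝ (Fin N)) := {x | x ∈ Ω ∧ gradient u x ≠ 0} with hU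
  have hUo : IsOpen U := isOpen_gradient_ne_zero hΩ hu1
  have cw : ∀ x ∈ U, ContDiffAt ℝ 3 w x := fun x hx => by
    rw [hw]
    exact (hu3.contDiffAt (hUo.mem_nhds hx)).log (hpos x hx.1).ne'
  have hgw : ∀ x ∈ Ω, ‖gradient u x‖ = u x * ‖gradient w x‖ := fun x hx => by
    rw [hw]
    exact norm_gradient_eq hΩ hu1 hpos hx
  have hgpos : ∀ x ∈ U, 0 < ‖gradient w x‖ := fun x hx => by
    have h1 := norm_pos_iff.mpr hx.2
    rw [hgw x hx.1] at h1
    exact pos_of_mul_pos_right h1 (hpos x hx.1).le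
  have hsum : ∀ x ∈ U, 0 < ∑ i, partialD i w x * partialD i w x := fun x hx => by
    rw [sum_partialD_sq_eq]
    have := hgpos x hx
    positivity
  have cw1 : ∀ x ∈ U, ∀ i, ContDiffAt ℝ 2 (partialD i w) x :=
    fun x hx i => (cw x hx).partialD (by norm_num) i
  have cy : ∀ x ∈ U, ContDiffAt ℝ 2 y x := fun x hx => by
    rw [hy]
    exact (ContDiffAt.sum fun i _ => (cw1 x hx i).mul (cw1 x hx i)).log (hsum x hx).ne'
  have hey : ∀ x ∈ U, Real.exp (y x) = ∑ i, partialD i w x * partialD i w x := fun x hx => by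
    rw [hy]
    exact Real.exp_log (hsum x hx)
  refine ⟨cw, cy, hey, fun x hx => ?_⟩
  have hnorm : ∀ z ∈ U, ‖gradient u z‖ = Real.exp (w z + y z / 2) := by
    intro z hz
    have h1 : ‖gradient w z‖ = Real.exp (y z / 2) := by
      refine (sq_eq_sq₀ (norm_nonneg _) (Real.exp_pos _).le).mp ?_
      rw [← sum_partialD_sq_eq, ← hey z hz, ← Real.exp_nat_mul]
      congr 1
      push_cast
      ring
    rw [hgw z hz.1, h1, Real.exp_add, hw]
    simp only
    rw [Real.exp_log (hpos z hz.1)]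
  have hfield : ∀ i, (fun z => pGradField p u z i) =ᶠ[𝓝 x]
      fun z => Real.exp ((p - 1) * w z + (p - 2) / 2 * y z) * partialD i w z := by
    intro i
    filter_upwards [hUo.mem_nhds hx] with z hz
    have h1 : u z = Real.exp (w z) := by
      rw [hw]
      exact (Real.exp_log (hpos z hz.1)).symm
    have h2 : partialD i u z = u z * partialD i w z := by
      rw [hw]
      exact partialD_log_comp hΩ hu1 hpos hz.1 i
    simp only [pGradField, PiLp.smul_apply, smul_eq_mul, gradient_coord]
    rw [h2, hnorm z hz, ← Real.exp_mul, h1, ← mul_assoc, ← Real.exp_add]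
    congr 2
    ring
  have dw : DifferentiableAt ℝ w x := (cw x hx).differentiableAt (by norm_num)
  have dy : DifferentiableAt ℝ y x := (cy x hx).differentiableAt (by norm_num)
  have dE : DifferentiableAt ℝ (fun z => (p - 1) * w z + (p - 2) / 2 * y z) x :=
    (dw.const_mul _).add (dy.const_mul _)
  obtain ⟨hd, htr⟩ := hdiv x hx.1
  rw [trace_fderiv_eq_sum_partialD hd, hnorm x hx, ← Real.exp_mul] at htr
  have hi : ∀ i, partialD i (fun z => pGradField p u z i) x
      = Real.exp ((p - 1) * w x + (p - 2) / 2 * y x) * (partialD i (partialD i w) x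
        + (p - 2) / 2 * (partialD i y x * partialD i w x)
        + (p - 1) * (partialD i w x * partialD i w x)) := by
    intro i
    have dwi : DifferentiableAt ℝ (partialD i w) x := (cw1 x hx i).differentiableAt (by norm_num)
    rw [partialD_congr (hfield i), partialD_mul dE.exp dwi, partialD_exp dE,
      partialD_add (dw.const_mul _) (dy.const_mul _), partialD_const_mul _ dw,
      partialD_const_mul _ dy]
    ring
  simp only [hi, ← Finset.mul_sum, Finset.sum_add_distrib] at htr
  rw [← hey x hx] at htr
  have he : Real.exp ((w x + y x / 2) * q) = Real.exp ((p - 1) * w x + (p - 2) / 2 * y x)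
      * Real.exp ((q - p + 1) * w x + (q - p + 1 + 1) / 2 * y x) := by
    rw [← Real.exp_add]
    congr 1
    ring
  rw [he] at htr
  linarith [mul_left_cancel₀ (Real.exp_pos _).ne' htr]

end StrongSolution

/-- Interior gradient estimate for the logarithm of a positive solution of `(E)`. -/
lemma exists_norm_gradient_log_le {N : ℕ} (hN : 0 < N) {p q : ℝ} (hp : 1 < p) (hq : p - 1 < q) :
    ∃ K : ℝ, 0 < K ∧ ∀ Ω : Set (EuclideanSpace ℝ (Fin N)), IsOpen Ω →
      ∀ u : EuclideanSpace ℝ (Fin N) → ℝ, IsStrongSolution p q Ω u → (∀ x ∈ Ω, 0 < u x) →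
      ∀ (a : EuclideanSpace ℝ (Fin N)) (R : ℝ), 0 < R → closedBall a R ⊆ Ω →
      ∀ x ∈ closedBall a (R / 2), ‖gradient (fun z => Real.log (u z)) x‖ ≤ K / R := by
  obtain ⟨K, hK, hbound⟩ := exists_gradient_bound_at_max hN hp (by linarith : 0 < q - p + 1)
  refine ⟨√(2 * K), by positivity, fun Ω hΩ u hu hpos a R hR hball x hx => ?_⟩
  set w : EuclideanSpace ℝ (Fin N) → ℝ := fun z => Real.log (u z) with hw
  set y : EuclideanSpace ℝ (Fin N) → ℝ :=
    fun z => Real.log (∑ i, partialD i w z * partialD i w z) with hy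
  have hwΩ : ContDiffOn ℝ 1 w Ω := hu.1.log fun z hz => (hpos z hz).ne'
  have hgc := (continuousOn_gradient hΩ hwΩ).mono hball
  have hcont : ContinuousOn (fun z => (R ^ 2 - ‖z - a‖ ^ 2) ^ 2 * ‖gradient w z‖ ^ 2)
      (closedBall a R) := by fun_prop
  obtain ⟨x₀, hx₀, hmax⟩ := (isCompact_closedBall a R).exists_isMaxOn
    ⟨a, mem_closedBall_self hR.le⟩ hcont
  have hF : (R ^ 2 - ‖x₀ - a‖ ^ 2) ^ 2 * ‖gradient w x₀‖ ^ 2 ≤ K * R ^ 2 := by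
    by_contra! hlt
    have hpos₀ : 0 < (R ^ 2 - ‖x₀ - a‖ ^ 2) ^ 2 * ‖gradient w x₀‖ ^ 2 :=
      lt_trans (by positivity) hlt
    have hρ0 : R ^ 2 - ‖x₀ - a‖ ^ 2 ≠ 0 := by
      intro h
      simp [h] at hpos₀
    have hg0 : ‖gradient w x₀‖ ≠ 0 := by
      intro h
      simp [h] at hpos₀
    have hle : ‖x₀ - a‖ ≤ R := by rwa [← dist_eq_norm]
    have hρ : 0 < R ^ 2 - ‖x₀ - a‖ ^ 2 := by
      refine lt_of_le_of_ne ?_ hρ0.symm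
      have := pow_le_pow_left₀ (norm_nonneg _) hle 2
      linarith
    have hU : x₀ ∈ {z | z ∈ Ω ∧ gradient u z ≠ 0} := by
      refine ⟨hball hx₀, norm_ne_zero_iff.mp ?_⟩
      rw [norm_gradient_eq hΩ hu.1 hpos (hball hx₀)]
      exact mul_ne_zero (hpos _ (hball hx₀)).ne' hg0
    have hUo := isOpen_gradient_ne_zero hΩ hu.1
    obtain ⟨cw, cy, hey, heq⟩ := hu.log_equation hΩ hpos hw hy
    have hexp : ∀ z ∈ {z | z ∈ Ω ∧ gradient u z ≠ 0}, 0 < R ^ 2 - ‖z - a‖ ^ 2 →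
        Real.exp (y z + 2 * Real.log (R ^ 2 - ‖z - a‖ ^ 2))
          = (R ^ 2 - ‖z - a‖ ^ 2) ^ 2 * ‖gradient w z‖ ^ 2 := by
      intro z hz hρz
      rw [Real.exp_add, hey z hz, sum_partialD_sq_eq, two_mul, Real.exp_add, Real.exp_log hρz]
      ring
    have hloc : IsLocalMax (fun z => y z + 2 * Real.log (R ^ 2 - ‖z - a‖ ^ 2)) x₀ := by
      have hcρ : Continuous fun z : EuclideanSpace ℝ (Fin N) => R ^ 2 - ‖z - a‖ ^ 2 := by
        fun_prop
      filter_upwards [hUo.mem_nhds hU, hcρ.continuousAt.eventually_const_lt hρ] with z hz hρz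
      rw [← Real.exp_le_exp, hexp z hz hρz, hexp x₀ hU hρ]
      refine hmax ?_
      rw [mem_closedBall, dist_eq_norm]
      exact le_of_sq_le_sq (by linarith) hR.le
    have := hbound w y _ hUo cw cy hey heq x₀ hU a R hρ hloc
    rw [hey x₀ hU, sum_partialD_sq_eq] at this
    exact absurd this (not_le.mpr hlt)
  have hxa : ‖x - a‖ ≤ R / 2 := by rwa [← dist_eq_norm]
  have hxR : (R ^ 2 - ‖x - a‖ ^ 2) ^ 2 * ‖gradient w x‖ ^ 2 ≤ K * R ^ 2 :=
    le_trans (hmax (closedBall_subset_closedBall (by linarith) hx)) hF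
  have hρ : R ^ 2 * (3 / 4) ≤ R ^ 2 - ‖x - a‖ ^ 2 := by
    have := pow_le_pow_left₀ (norm_nonneg _) hxa 2
    linarith
  have h1 : R ^ 2 * (R ^ 2 * ‖gradient w x‖ ^ 2) ≤ R ^ 2 * (2 * K) := by
    have h2 : (R ^ 2 * (3 / 4)) ^ 2 * ‖gradient w x‖ ^ 2 ≤ K * R ^ 2 :=
      le_trans (by gcongr) hxR
    have h3 : 0 ≤ K * R ^ 2 := by positivity
    linarith
  rw [le_div_iff₀ hR]
  refine Real.le_sqrt_of_sq_le ?_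
  have := le_of_mul_le_mul_left h1 (by positivity)
  linarith

/-- Harnack inequality for positive solutions of (E). -/
theorem harnack (N : ℕ) (hN : 2 ≤ N) (p q : ℝ) (hp : 1 < p) (hq : p - 1 < q) :
    ∃ C : ℝ, 0 < C ∧
      ∀ Ω : Set (EuclideanSpace ℝ (Fin N)), IsOpen Ω →
        ∀ u : EuclideanSpace ℝ (Fin N) → ℝ, IsStrongSolution p q Ω u →
          (∀ x ∈ Ω, 0 < u x) →
          ∀ a ∈ Ω, ∀ R : ℝ, 0 < R → Metric.closedBall a R ⊆ Ω →
            ∀ x ∈ Metric.closedBall a (R / 2), ∀ y ∈ Metric.closedBall a (R / 2),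
              u x ≤ C * u y := by
  obtain ⟨K, hK, hgrad⟩ := exists_norm_gradient_log_le (by omega : 0 < N) hp hq
  refine ⟨Real.exp K, Real.exp_pos K, fun Ω hΩ u hu hpos a _ R hR hball x hx y hy => ?_⟩
  have hsub : closedBall a (R / 2) ⊆ Ω :=
    (closedBall_subset_closedBall (by linarith)).trans hball
  have hd : ∀ z ∈ closedBall a (R / 2), DifferentiableAt ℝ (fun z => Real.log (u z)) z :=
    fun z hz => ((hu.1.contDiffAt (hΩ.mem_nhds (hsub hz))).differentiableAt (by norm_num)).log
      (hpos z (hsub hz)).ne'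
  have hfd : ∀ z ∈ closedBall a (R / 2), ‖fderiv ℝ (fun z => Real.log (u z)) z‖ ≤ K / R := by
    intro z hz
    rw [← toDual_gradient, LinearIsometryEquiv.norm_map]
    exact hgrad Ω hΩ u hu hpos a R hR hball z hz
  have h := (convex_closedBall a (R / 2)).norm_image_sub_le_of_norm_fderiv_le hd hfd hy hx
  have hdist : ‖x - y‖ ≤ R := by
    rw [← dist_eq_norm]
    have h1 := dist_triangle_right x y a
    rw [mem_closedBall] at hx hy
    linarith
  have h2 : Real.log (u x) ≤ K + Real.log (u y) := by
    have h3 : K / R * ‖x - y‖ ≤ K := by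
      calc K / R * ‖x - y‖ ≤ K / R * R := by gcongr
        _ = K := by field_simp
    have h4 := (le_abs_self _).trans h
    linarith
  rw [← Real.exp_log (hpos x (hsub hx)), ← Real.exp_log (hpos y (hsub hy)), ← Real.exp_add]
  exact Real.exp_le_exp.mpr h2
end
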